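/- Let X be a compact forward invariant set (g(X) ⊂ X) with P_g ⊂ X, and define X_* = {x ∈ hull(X) : GO(x) ⊂ hull(X)}. If X_* ≠ ∅, then either P_g ⊂ X_* or ∂X_* ⊂ P_g. -/

import Mathlib

open Set Function Metric Topology Filter

noncomputable section

/-- A topological disk: a (nonempty, connected) simply connected planar domain. -/
def IsTopDisk (V : Set ℂ) : Prop :=
  IsOpen V ∧ IsConnected V ∧ SimplyConnectedSpace V

/-- Critical points of `g` lying in `U'`. -/
def critPts (g : ℂ → ℂ) (U' : Set ℂ) : Set ℂ := {z | z ∈ U' ∧ deriv g z = 0}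

/-- The postcritical set of `g : U' → U`. -/
def postCrit (g : ℂ → ℂ) (U' : Set ℂ) : Set ℂ :=
  closure (⋃ n : ℕ, g^[n] '' critPts g U')

/-- `g : U' → U` is a proper map: preimages of compact subsets of `U` are compact. -/
def ProperOn (g : ℂ → ℂ) (U' U : Set ℂ) : Prop :=
  ∀ K : Set ℂ, K ⊆ U → IsCompact K → IsCompact (U' ∩ g ⁻¹' K)

/-- `g : U' → U` has degree `d`: every point of `U` has a preimage, and every point of `U`
which is not a critical value has exactly `d` preimages in `U'`. -/
def HasDeg (g : ℂ → ℂ) (U' U : Set ℂ) (d : ℕ) : Prop :=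
  (∀ w ∈ U, (U' ∩ g ⁻¹' {w}).Nonempty) ∧
  ∀ w ∈ U, w ∉ g '' critPts g U' → (U' ∩ g ⁻¹' {w}).ncard = d

/-- Standing assumptions: `U' ⊆ U` are simply connected domains in `ℂ` with `U' ≠ U`,
`g : U' → U` is a proper holomorphic map of degree `d ≥ 2`, all forward iterates of the
critical points are defined, the postcritical set is a compact subset of `U'`, and if the
postcritical set is a singleton `{c}` then `g⁻¹(c) ≠ {c}`. -/
structure PLSetting (g : ℂ → ℂ) (U' U : Set ℂ) (d : ℕ) : Prop where
  disk' : IsTopDisk U'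
  disk : IsTopDisk U
  subset : U' ⊆ U
  ne : U' ≠ U
  two_le_d : 2 ≤ d
  holo : DifferentiableOn ℂ g U'
  mapsTo : MapsTo g U' U
  proper : ProperOn g U' U
  deg : HasDeg g U' U d
  crit_orbit : ∀ c ∈ critPts g U', ∀ n : ℕ, g^[n] c ∈ U'
  postCrit_compact : IsCompact (postCrit g U')
  postCrit_subset : postCrit g U' ⊆ U'
  postCrit_singleton : ∀ c : ℂ, postCrit g U' = {c} → U' ∩ g ⁻¹' {c} ≠ {c}

/-- The topological hull of `X`: the complement of the unbounded component of `ℂ \ X`. -/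
def topHull (X : Set ℂ) : Set ℂ :=
  {z | Bornology.IsBounded (connectedComponentIn Xᶜ z)}

/-- The grand orbit of `x`: points `z` (with iterates defined) such that
`g^m(z) = g^n(x)` for some `m, n ≥ 0`. -/
def grandOrbit (g : ℂ → ℂ) (U' : Set ℂ) (x : ℂ) : Set ℂ :=
  {z | ∃ m n : ℕ, (∀ k < m, g^[k] z ∈ U') ∧ g^[m] z = g^[n] x}

/-! Write `Q = hull X` and `Y = X_*`; both are compact and full, `g Q ⊆ Q` and `g⁻¹ Y ⊆ Y`. The
claim is that a point `x ∈ Y ∖ P_g` forces `Q ⊆ Y`. Inverse branches of `gⁿ` near `x` exist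
because `x ∉ P_g`, and they contract by Schwarz's lemma, so the full backward orbit of a small
disk about `x` stays close to `Y`. Its closure `F` is backward invariant and has nonempty
interior. Consider the competitors for `(V, F)`: subharmonic functions `V → [0, 1]` vanishing
on `F`. Pushing forward by the maximum over fibres of `g` turns a competitor `s` for `(U', F)`
into a competitor `t` for `(U, F)` with `s ≤ t ∘ g`. Conversely, a competitor for `(U, F)` can
be improved on `U'`: a barrier at a point of `U ∩ ∂U'` gives a definite gain near that point,
and the gain propagates through the connected set `U' ∖ Y`. If `p ∈ Q ∖ Y`, then `F` can be
chosen such that the gain reaches both `p` and the frontier of a neighbourhood of `Q`. The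
latter gain gives `(1 + η) s ≤ t ∘ g` on `Q`, and iteration along the orbits in `Q` shows that
every competitor vanishes on `Q`, contradicting the gain at `p`. -/

/-! ### Topological hulls -/

theorem isPreconnected_compl_closedBall {E : Type*} [NormedAddCommGroup E] [NormedSpace ℝ E]
    (hE : 1 < Module.rank ℝ E) {R : ℝ} (hR : 0 ≤ R) :
    IsPreconnected (closedBall (0 : E) R)ᶜ := by
  have polar : (closedBall (0 : E) R)ᶜ =
      (fun p : ℝ × E ↦ p.1 • p.2) '' (Ioi R ×ˢ sphere (0 : E) 1) := by
    ext z
    simp only [mem_compl_iff, mem_closedBall_zero_iff, not_le, mem_image, mem_prod, mem_Ioi,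
      mem_sphere_iff_norm, sub_zero, Prod.exists]
    constructor
    · intro hz
      have hz0 : ‖z‖ ≠ 0 := (hR.trans_lt hz).ne'
      refine ⟨‖z‖, ‖z‖⁻¹ • z, ⟨hz, ?_⟩, smul_inv_smul₀ hz0 z⟩
      rw [norm_smul, norm_inv, norm_norm, inv_mul_cancel₀ hz0]
    · rintro ⟨t, w, ⟨ht, hw⟩, rfl⟩
      rwa [norm_smul, hw, mul_one, Real.norm_of_nonneg (hR.trans ht.le)]
  rw [polar]
  exact (isPreconnected_Ioi.prod (isPreconnected_sphere hE 0 1)).image _ (by fun_prop)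

theorem not_isBounded_compl_of_isBounded {E : Type*} [NormedAddCommGroup E] [NormedSpace ℝ E]
    [Nontrivial E] {s : Set E} (hs : Bornology.IsBounded s) : ¬ Bornology.IsBounded sᶜ :=
  fun h ↦ NormedSpace.unbounded_univ ℝ E (union_compl_self s ▸ hs.union h)

theorem subset_of_disjoint_frontier {α : Type*} [TopologicalSpace α] {C K : Set α}
    (hC : IsPreconnected C) (hne : (C ∩ K).Nonempty) (hdisj : Disjoint C (frontier K)) :
    C ⊆ K := by
  have hcover : C ⊆ interior K ∪ (closure K)ᶜ := fun z hz ↦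
    or_iff_not_imp_left.2 fun hi hc ↦ disjoint_left.1 hdisj hz ⟨hc, hi⟩
  have hmeet : (C ∩ interior K).Nonempty := by
    obtain ⟨w, hwC, hwK⟩ := hne
    exact ⟨w, hwC, (hcover hwC).resolve_right fun h ↦ h (subset_closure hwK)⟩
  exact (hC.subset_left_of_subset_union isOpen_interior isClosed_closure.isOpen_compl
    (disjoint_compl_right.mono_left (interior_subset.trans subset_closure)) hcover hmeet).trans
      interior_subset

theorem frontier_connectedComponentIn_compl_subset {α : Type*} [TopologicalSpace α]
    [LocallyConnectedSpace α] {A : Set α} (hA : IsClosed A) (a : α) :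
    frontier (connectedComponentIn Aᶜ a) ⊆ A := by
  intro z hz
  by_contra hzA
  have hopen (x : α) : IsOpen (connectedComponentIn Aᶜ x) := hA.isOpen_compl.connectedComponentIn
  have hmem : z ∈ connectedComponentIn Aᶜ z := mem_connectedComponentIn hzA
  obtain ⟨w, hwz, hwa⟩ := mem_closure_iff_nhds.1 hz.1 _ ((hopen z).mem_nhds hmem)
  refine hz.2 ?_
  rwa [(hopen a).interior_eq, connectedComponentIn_eq hwa, ← connectedComponentIn_eq hwz]

theorem isSimplyConnected_univ (X : Type*) [TopologicalSpace X] [SimplyConnectedSpace X] :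
    IsSimplyConnected (univ : Set X) :=
  (Homeomorph.Set.univ X).toHomotopyEquiv.simplyConnectedSpace

theorem exists_continuous_exp_comp_eq {X : Type*} [TopologicalSpace X] [SimplyConnectedSpace X]
    [LocallyPathConnectedSpace X] {k : X → ℂ} (hk : Continuous k) (hk0 : ∀ x, k x ≠ 0) :
    ∃ c : X → ℂ, Continuous c ∧ ∀ x, Complex.exp (c x) = k x := by
  obtain ⟨c, hc, h⟩ := Complex.exists_continuousOn_eqOn_exp_comp (isSimplyConnected_univ X)
    isOpen_univ hk.continuousOn (by rintro ⟨x, -, hx⟩; exact hk0 x hx)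
  exact ⟨c, continuousOn_univ.1 hc, fun x ↦ h (mem_univ x)⟩

theorem sub_eq_sub_of_exp_eq {X : Type*} [TopologicalSpace X] {s : Set X} (hs : IsPreconnected s)
    {f g : X → ℂ} (hf : ContinuousOn f s) (hg : ContinuousOn g s)
    (hfg : ∀ x ∈ s, Complex.exp (f x) = Complex.exp (g x)) {x y : X} (hx : x ∈ s) (hy : y ∈ s) :
    f x - g x = f y - g y := by
  have hexp : ∀ z ∈ s, Complex.exp (f z - g z) = 1 := fun z hz ↦ by
    rw [Complex.exp_sub, hfg z hz, div_self (Complex.exp_ne_zero _)]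
  refine Complex.isCoveringMap_exp.constOn_of_comp hs (hf.sub hg) (fun a ha b hb ↦ ?_) hx hy
  exact Subtype.ext ((hexp a ha).trans (hexp b hb).symm)

theorem frontier_inter_subset_compl_of_separated {X : Type*} [TopologicalSpace X] {s u v : Set X}
    (hs : IsOpen s) (hu : IsOpen u) (hv : IsOpen v) (hsuv : s ⊆ u ∪ v)
    (hdisj : Disjoint s (u ∩ v)) : frontier (s ∩ u) ⊆ sᶜ := by
  intro z hz hzs
  rcases hsuv hzs with hzu | hzv
  · exact hz.2 ((hs.inter hu).interior_eq.symm ▸ ⟨hzs, hzu⟩)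
  · obtain ⟨w, hwv, hws, hwu⟩ := mem_closure_iff.1 hz.1 v hv hzv
    exact disjoint_left.1 hdisj hws ⟨hwu, hwv⟩

/-- A Mayer–Vietoris statement: a separation `A ∪ B` of `V ∩ W` would give, with a Urysohn function
`φ` for `Wᶜ` and `Vᶜ`, logarithms of one function `X → ℂˣ` on `V` and on `W` whose difference
is `0` on `B` and `2πi` on `A`. -/
theorem isPreconnected_inter_of_union_eq_univ {X : Type*} [TopologicalSpace X] [NormalSpace X]
    [SimplyConnectedSpace X] [LocallyPathConnectedSpace X] {V W : Set X} (hVo : IsOpen V)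
    (hWo : IsOpen W) (hV : IsPreconnected V) (hW : IsPreconnected W) (hVW : V ∪ W = univ) :
    IsPreconnected (V ∩ W) := by
  classical
  rintro u v hu hv huv ⟨p, hp, hpu⟩ ⟨q, hq, hqv⟩
  by_contra hsep
  rw [← not_disjoint_iff_nonempty_inter, not_not] at hsep
  set A : Set X := V ∩ W ∩ u
  have hqA : q ∉ A := fun h ↦ disjoint_left.1 hsep hq ⟨h.2, hqv⟩
  have hfrontier : frontier A ⊆ (V ∩ W)ᶜ :=
    frontier_inter_subset_compl_of_separated (hVo.inter hWo) hu hv huv hsep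
  obtain ⟨φ, hφW, hφV, -⟩ := exists_continuous_zero_one_of_isClosed hWo.isClosed_compl
    hVo.isClosed_compl (disjoint_compl_left_iff_subset.2 fun z hzV ↦
      (hVW.symm ▸ mem_univ z : z ∈ V ∪ W).resolve_left hzV)
  let a : X → ℂ := A.piecewise (fun z ↦ 2 * Real.pi * Complex.I * φ z) 0
  let b : X → ℂ := A.piecewise (fun z ↦ 2 * Real.pi * Complex.I * φ z - 2 * Real.pi * Complex.I) 0
  have ha : ContinuousOn a V := by
    refine ContinuousOn.piecewise (fun z hz ↦ ?_) (by fun_prop) continuousOn_const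
    simp [hφW fun hzW ↦ hfrontier hz.2 ⟨hz.1, hzW⟩]
  have hb : ContinuousOn b W := by
    refine ContinuousOn.piecewise (fun z hz ↦ ?_) (by fun_prop) continuousOn_const
    simp [hφV fun hzV ↦ hfrontier hz.2 ⟨hzV, hz.1⟩]
  have hab : ∀ z, Complex.exp (a z) = Complex.exp (b z) := by
    intro z
    by_cases hz : z ∈ A
    · simp [a, b, hz, Complex.exp_sub, Complex.exp_two_pi_mul_I]
    · simp [a, b, hz]
  have hk : Continuous fun z ↦ Complex.exp (a z) := by
    rw [← continuousOn_univ, ← hVW]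
    exact ha.cexp.union_of_isOpen (hb.cexp.congr fun z _ ↦ hab z) hVo hWo
  obtain ⟨c, hc, hca⟩ := exists_continuous_exp_comp_eq hk fun z ↦ Complex.exp_ne_zero _
  have hac := sub_eq_sub_of_exp_eq hV ha hc.continuousOn (fun z _ ↦ (hca z).symm) hp.1 hq.1
  have hbc := sub_eq_sub_of_exp_eq hW hb hc.continuousOn
    (fun z _ ↦ (hab z).symm.trans (hca z).symm) hp.2 hq.2
  have hpA : p ∈ A := ⟨hp, hpu⟩
  simp only [a, b, piecewise_eq_of_mem _ _ _ hpA, piecewise_eq_of_notMem _ _ _ hqA] at hac hbc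
  exact Complex.two_pi_I_ne_zero (by linear_combination hac - hbc)

theorem exists_exp_ne_sub_of_isBounded {B : Set ℂ} (hB : Bornology.IsBounded B) {c : ℂ → ℂ}
    (hc : Continuous c) (a : ℂ) : ∃ z ∉ B, Complex.exp (c z) ≠ z - a := by
  by_contra! hcon
  obtain ⟨R, hR, hBR⟩ := hB.subset_ball_lt 0 a
  have hcircle : ∀ t : ℝ, circleMap a R t ∉ B := fun t ht ↦
    (circleMap_mem_sphere a hR.le t).not_lt (hBR ht)
  have hRexp : Complex.exp (Real.log R) = R := by rw [← Complex.ofReal_exp, Real.exp_log hR]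
  have hlog := sub_eq_sub_of_exp_eq isPreconnected_univ
    (f := fun t : ℝ ↦ c (circleMap a R t)) (g := fun t : ℝ ↦ Real.log R + t * Complex.I)
    (by fun_prop) (by fun_prop)
    (fun t _ ↦ by rw [hcon _ (hcircle t), circleMap_sub_center, circleMap_zero, Complex.exp_add,
      hRexp]) (mem_univ 0) (mem_univ (2 * Real.pi))
  have hperiod : circleMap a R (2 * Real.pi) = circleMap a R 0 := by simp [circleMap]
  rw [hperiod] at hlog
  push_cast at hlog
  exact Complex.two_pi_I_ne_zero (by linear_combination hlog)

theorem subset_topHull (A : Set ℂ) : A ⊆ topHull A := by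
  intro x hx
  rw [topHull, mem_ofPred_eq, connectedComponentIn_eq_empty (notMem_compl_iff.2 hx)]
  exact Bornology.isBounded_empty

theorem topHull_mono {A B : Set ℂ} (h : A ⊆ B) : topHull A ⊆ topHull B :=
  fun z (hz : Bornology.IsBounded (connectedComponentIn Aᶜ z)) ↦
    hz.subset (connectedComponentIn_mono _ (compl_subset_compl.2 h))

theorem subset_topHull_of_frontier_subset {A K : Set ℂ} (hK : Bornology.IsBounded K)
    (h : frontier K ⊆ A) : K ⊆ topHull A := by
  intro z hz
  by_cases hzA : z ∈ A
  · exact subset_topHull A hzA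
  · exact hK.subset (subset_of_disjoint_frontier isPreconnected_connectedComponentIn
      ⟨z, mem_connectedComponentIn hzA, hz⟩
      (disjoint_left.2 fun w hw hwK ↦ connectedComponentIn_subset _ _ hw (h hwK)))

theorem exists_compl_topHull_eq {A : Set ℂ} (hA : Bornology.IsBounded A) :
    ∃ R p, (closedBall (0 : ℂ) R)ᶜ ⊆ (topHull A)ᶜ ∧
      (topHull A)ᶜ = connectedComponentIn Aᶜ p := by
  obtain ⟨R, hR, hAR⟩ := hA.exists_pos_norm_le
  have hext : (closedBall (0 : ℂ) R)ᶜ ⊆ Aᶜ :=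
    compl_subset_compl.2 fun z hz ↦ mem_closedBall_zero_iff.2 (hAR z hz)
  have hconn : ∀ q ∈ (closedBall (0 : ℂ) R)ᶜ,
      (closedBall (0 : ℂ) R)ᶜ ⊆ connectedComponentIn Aᶜ q := fun q hq ↦
    (isPreconnected_compl_closedBall (by simp [Complex.rank_real_complex])
      hR.le).subset_connectedComponentIn hq hext
  have hunbdd := not_isBounded_compl_of_isBounded (isBounded_closedBall (x := (0 : ℂ)) (r := R))
  obtain ⟨p, hp⟩ : (closedBall (0 : ℂ) R)ᶜ.Nonempty :=
    nonempty_iff_ne_empty.2 fun h ↦ hunbdd (h ▸ Bornology.isBounded_empty)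
  refine ⟨R, p, fun q hq hqA ↦ hunbdd (Bornology.IsBounded.subset hqA (hconn q hq)), ?_⟩
  refine Subset.antisymm (fun z hz ↦ ?_) fun z hz hzA ↦ hunbdd ?_
  · obtain ⟨w, hwz, hwR⟩ : (connectedComponentIn Aᶜ z ∩ (closedBall (0 : ℂ) R)ᶜ).Nonempty := by
      rw [← not_disjoint_iff_nonempty_inter, disjoint_compl_right_iff_subset]
      exact fun h ↦ hz (isBounded_closedBall.subset h)
    rw [connectedComponentIn_eq (hconn p hp hwR), ← connectedComponentIn_eq hwz]
    exact mem_connectedComponentIn fun hzA ↦ hz (subset_topHull A hzA)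
  · refine Bornology.IsBounded.subset hzA ?_
    rw [← connectedComponentIn_eq hz]
    exact hconn p hp

theorem isPreconnected_compl_topHull {A : Set ℂ} (hA : Bornology.IsBounded A) :
    IsPreconnected (topHull A)ᶜ := by
  obtain ⟨R, p, -, hp⟩ := exists_compl_topHull_eq hA
  exact hp ▸ isPreconnected_connectedComponentIn

theorem isCompact_topHull {A : Set ℂ} (hA : IsCompact A) : IsCompact (topHull A) := by
  obtain ⟨R, p, hR, hp⟩ := exists_compl_topHull_eq hA.isBounded
  refine isCompact_of_isClosed_isBounded ?_
    (isBounded_closedBall.subset (compl_subset_compl.1 hR))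
  rw [← isOpen_compl_iff, hp]
  exact hA.isClosed.isOpen_compl.connectedComponentIn

theorem frontier_topHull_subset {A : Set ℂ} (hA : IsCompact A) : frontier (topHull A) ⊆ A := by
  obtain ⟨R, p, -, hp⟩ := exists_compl_topHull_eq hA.isBounded
  rw [← frontier_compl, hp]
  exact frontier_connectedComponentIn_compl_subset hA.isClosed p

theorem topHull_topHull {A : Set ℂ} (hA : IsCompact A) : topHull (topHull A) = topHull A := by
  refine Subset.antisymm (fun z hz ↦ by_contra fun hzA ↦ ?_) (subset_topHull _)
  exact not_isBounded_compl_of_isBounded (isCompact_topHull hA).isBounded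
    (Bornology.IsBounded.subset hz
      ((isPreconnected_compl_topHull hA.isBounded).subset_connectedComponentIn hzA Subset.rfl))

theorem topHull_subset_of_isSimplyConnected {A V : Set ℂ} (hA : IsCompact A) (hVo : IsOpen V)
    (hV : IsSimplyConnected V) (hAV : A ⊆ V) : topHull A ⊆ V := by
  classical
  intro a ha
  by_contra haV
  obtain ⟨l, hl, hexp⟩ := Complex.exists_continuousOn_eqOn_exp_comp hV hVo
    (g := fun z ↦ z - a) (by fun_prop) (by
      rintro ⟨z, hz, hza⟩
      exact haV (sub_eq_zero.1 hza ▸ hz))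
  obtain ⟨L, hL⟩ := ContinuousMap.exists_restrict_eq hA.isClosed
    ⟨A.domRestrict l, continuousOn_iff_continuous_domRestrict.1 (hl.mono hAV)⟩
  have hLl : ∀ z ∈ A, L z = l z := fun z hz ↦ DFunLike.congr_fun hL ⟨z, hz⟩
  set B := connectedComponentIn Aᶜ a
  have haB : a ∈ B := mem_connectedComponentIn fun h ↦ haV (hAV h)
  let k : ℂ → ℂ := B.piecewise (fun z ↦ Complex.exp (L z)) fun z ↦ z - a
  have hk : Continuous k := by
    refine Continuous.piecewise (fun z hz ↦ ?_) (by fun_prop) (by fun_prop)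
    have hzA := frontier_connectedComponentIn_compl_subset hA.isClosed a hz
    rw [hLl z hzA]
    exact hexp (hAV hzA)
  have hk0 : ∀ z, k z ≠ 0 := by
    intro z
    by_cases hz : z ∈ B
    · simp [k, hz]
    · simp only [k, hz, not_false_eq_true, piecewise_eq_of_notMem]
      exact sub_ne_zero.2 fun h ↦ hz (h ▸ haB)
  obtain ⟨c, hc, hck⟩ := exists_continuous_exp_comp_eq hk hk0
  obtain ⟨z, hz, hne⟩ := exists_exp_ne_sub_of_isBounded ha hc a
  exact hne ((hck z).trans (piecewise_eq_of_notMem _ _ _ hz))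

/-! ### Grand orbits -/

section Invariance

variable {α β : Type*} [TopologicalSpace α] [TopologicalSpace β]

theorem frontier_image_subset {f : α → β} {K : Set α} (hK : IsClosed (f '' K))
    (hf : ∀ z ∈ K, 𝓝 (f z) ≤ map f (𝓝 z)) : frontier (f '' K) ⊆ f '' frontier K := by
  intro w hw
  obtain ⟨z, hzK, rfl⟩ := hK.frontier_subset hw
  refine ⟨z, ⟨subset_closure hzK, fun hz ↦ hw.2 ?_⟩, rfl⟩
  rw [mem_interior_iff_mem_nhds] at hz ⊢
  exact hf z hzK (image_mem_map hz)

theorem frontier_inter_preimage_subset {f : α → β} {V : Set α} {K : Set β} (hV : IsOpen V)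
    (hf : ContinuousOn f V) (hK : IsClosed (V ∩ f ⁻¹' K)) :
    frontier (V ∩ f ⁻¹' K) ⊆ V ∩ f ⁻¹' frontier K := by
  intro z hz
  obtain ⟨hzV, hzK⟩ := hK.frontier_subset hz
  refine ⟨hzV, subset_closure hzK, fun hi ↦ hz.2 ?_⟩
  rw [mem_interior_iff_mem_nhds] at hi ⊢
  have hVz := hV.mem_nhds hzV
  exact inter_mem hVz ((hf.continuousAt hVz).preimage_mem_nhds hi)

theorem mapsTo_closure_of_continuousOn {f : α → α} {T : Set α} (hf : ContinuousOn f (closure T))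
    (hT : MapsTo f T T) : MapsTo f (closure T) (closure T) :=
  fun z hz ↦ closure_mono hT.image_subset
    (((hf z hz).mono subset_closure).mem_closure_image hz)

theorem inter_preimage_closure_subset {f : α → α} {V T : Set α} (hV : IsOpen V)
    (hf : ∀ z ∈ V, 𝓝 (f z) ≤ map f (𝓝 z)) (hT : V ∩ f ⁻¹' T ⊆ T) :
    V ∩ f ⁻¹' closure T ⊆ closure T := by
  rintro z ⟨hzV, hz⟩
  rw [mem_closure_iff_nhds]
  intro N hN
  obtain ⟨_, ⟨w, hw, rfl⟩, hwT⟩ := mem_closure_iff_nhds.1 hz _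
    (hf z hzV (image_mem_map (inter_mem hN (hV.mem_nhds hzV))))
  exact ⟨w, hw.1, hT ⟨hw.2, hwT⟩⟩

end Invariance

theorem mapsTo_topHull {g : ℂ → ℂ} {A : Set ℂ} (hA : IsCompact A)
    (hg : ContinuousOn g (topHull A)) (hopen : ∀ z ∈ topHull A, 𝓝 (g z) ≤ map g (𝓝 z))
    (hgA : MapsTo g A A) : MapsTo g (topHull A) (topHull A) := by
  have himage : IsCompact (g '' topHull A) := (isCompact_topHull hA).image_of_continuousOn hg
  refine mapsTo_iff_image_subset.2 (subset_topHull_of_frontier_subset himage.isBounded ?_)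
  exact (frontier_image_subset himage.isClosed hopen).trans
    ((image_mono (frontier_topHull_subset hA)).trans hgA.image_subset)

theorem inter_preimage_topHull_subset {g : ℂ → ℂ} {V A : Set ℂ} (hA : IsCompact A)
    (hV : IsOpen V) (hg : ContinuousOn g V) (hproper : IsCompact (V ∩ g ⁻¹' topHull A))
    (hgA : V ∩ g ⁻¹' A ⊆ A) : V ∩ g ⁻¹' topHull A ⊆ topHull A :=
  subset_topHull_of_frontier_subset hproper.isBounded
    ((frontier_inter_preimage_subset hV hg hproper.isClosed).trans
      ((inter_subset_inter_right V (preimage_mono (frontier_topHull_subset hA))).trans hgA))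

/-- The points of `V` with an orbit segment in `V` that ends in `S`: the full backward orbit of `S`
under `g : V → α`. -/
def backwardOrbit {α : Type*} (g : α → α) (V S : Set α) : Set α :=
  {z | ∃ n : ℕ, (∀ k < n, g^[k] z ∈ V) ∧ g^[n] z ∈ S}

theorem subset_backwardOrbit {α : Type*} (g : α → α) (V S : Set α) : S ⊆ backwardOrbit g V S :=
  fun _ hz ↦ ⟨0, by simp, hz⟩

theorem inter_preimage_backwardOrbit_subset {α : Type*} (g : α → α) (V S : Set α) :
    V ∩ g ⁻¹' backwardOrbit g V S ⊆ backwardOrbit g V S := by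
  rintro z ⟨hz, n, hn, hS⟩
  refine ⟨n + 1, fun k hk ↦ ?_, hS⟩
  rcases k with _ | k
  · exact hz
  · exact hn k (by omega)

theorem backwardOrbit_subset {α : Type*} {g : α → α} {V S Z : Set α} (hSZ : S ⊆ Z)
    (hZ : V ∩ g ⁻¹' Z ⊆ Z) : backwardOrbit g V S ⊆ Z := by
  rintro z ⟨n, hn, hS⟩
  induction n generalizing z with
  | zero => exact hSZ hS
  | succ n ih => exact hZ ⟨hn 0 n.succ_pos, ih (fun k hk ↦ hn (k + 1) (by omega)) hS⟩

/-- The set of points of `Q` whose whole grand orbit stays in `Q`; for `Q = hull X` this is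
`X_*`. -/
def grandOrbitCore (g : ℂ → ℂ) (V Q : Set ℂ) : Set ℂ := {x ∈ Q | grandOrbit g V x ⊆ Q}

section GrandOrbitCore

variable {g : ℂ → ℂ} {V Q : Set ℂ}

theorem grandOrbitCore_subset : grandOrbitCore g V Q ⊆ Q := sep_subset _ _

theorem mapsTo_grandOrbitCore : MapsTo g (grandOrbitCore g V Q) (grandOrbitCore g V Q) := by
  refine fun x hx ↦ ⟨hx.2 ⟨0, 1, by simp, rfl⟩, ?_⟩
  rintro z ⟨m, n, hV, hz⟩
  exact hx.2 ⟨m, n + 1, hV, hz⟩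

theorem inter_preimage_grandOrbitCore_subset :
    V ∩ g ⁻¹' grandOrbitCore g V Q ⊆ grandOrbitCore g V Q := by
  rintro z ⟨hzV, hz⟩
  refine ⟨hz.2 ⟨1, 0, by simpa using hzV, rfl⟩, ?_⟩
  rintro w ⟨m, n, hwV, hw⟩
  rcases n with _ | n
  · rw [iterate_zero_apply] at hw
    refine hz.2 ⟨m + 1, 0, fun k hk ↦ ?_, by rw [iterate_succ_apply', hw, iterate_zero_apply]⟩
    rcases Nat.lt_succ_iff_lt_or_eq.1 hk with hkm | rfl
    · exact hwV k hkm
    · exact hw ▸ hzV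
  · exact hz.2 ⟨m, n, hwV, hw⟩

theorem subset_grandOrbitCore {Z : Set ℂ} (hZQ : Z ⊆ Q) (hfwd : MapsTo g Z Z)
    (hbwd : V ∩ g ⁻¹' Z ⊆ Z) : Z ⊆ grandOrbitCore g V Q := by
  refine fun x hx ↦ ⟨hZQ hx, ?_⟩
  rintro w ⟨m, n, hwV, hw⟩
  exact hZQ (backwardOrbit_subset Subset.rfl hbwd ⟨m, hwV, hw ▸ hfwd.iterate n hx⟩)

theorem isClosed_grandOrbitCore (hV : IsOpen V) (hQ : IsClosed Q) (hg : ContinuousOn g Q)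
    (hopen : ∀ z ∈ V, 𝓝 (g z) ≤ map g (𝓝 z)) : IsClosed (grandOrbitCore g V Q) := by
  have hcl : closure (grandOrbitCore g V Q) ⊆ Q := closure_minimal grandOrbitCore_subset hQ
  exact isClosed_of_closure_subset (subset_grandOrbitCore hcl
    (mapsTo_closure_of_continuousOn (hg.mono hcl) mapsTo_grandOrbitCore)
    (inter_preimage_closure_subset hV hopen inter_preimage_grandOrbitCore_subset))

end GrandOrbitCore

theorem critPts_subset_postCrit (g : ℂ → ℂ) (U' : Set ℂ) : critPts g U' ⊆ postCrit g U' :=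
  fun c hc ↦ subset_closure (mem_iUnion.2 ⟨0, c, hc, rfl⟩)

namespace PLSetting

variable {g : ℂ → ℂ} {U' U : Set ℂ} {d : ℕ}

theorem nhds_le_map (H : PLSetting g U' U d) {z : ℂ} (hz : z ∈ U') :
    𝓝 (g z) ≤ map g (𝓝 z) := by
  have hana : AnalyticOnNhd ℂ g U' := H.holo.analyticOnNhd H.disk'.1
  refine (hana z hz).eventually_constant_or_nhds_le_map_nhds.resolve_left fun hconst ↦ ?_
  have hEq : EqOn g (fun _ ↦ g z) U' := hana.eqOn_of_preconnected_of_eventuallyEq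
    analyticOnNhd_const H.disk'.2.1.isPreconnected hz hconst
  have hU : U = {g z} := by
    refine Subset.antisymm (fun u hu ↦ ?_) (singleton_subset_iff.2 (H.mapsTo hz))
    obtain ⟨w, hw, rfl⟩ := H.deg.1 u hu
    exact hEq hw
  exact not_isOpen_singleton (g z) (hU ▸ H.disk.1)

theorem mapsTo_postCrit (H : PLSetting g U' U d) :
    MapsTo g (postCrit g U') (postCrit g U') := by
  refine mapsTo_closure_of_continuousOn (H.holo.continuousOn.mono H.postCrit_subset) ?_
  intro z hz
  obtain ⟨n, c, hc, rfl⟩ := mem_iUnion.1 hz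
  exact mem_iUnion.2 ⟨n + 1, c, hc, iterate_succ_apply' g n c⟩

variable {X : Set ℂ}

theorem topHull_subset (H : PLSetting g U' U d) (hX : IsCompact X) (hXU : X ⊆ U') :
    topHull X ⊆ U' :=
  topHull_subset_of_isSimplyConnected hX H.disk'.1 H.disk'.2.2 hXU

theorem isCompact_grandOrbitCore (H : PLSetting g U' U d) (hX : IsCompact X) (hXU : X ⊆ U') :
    IsCompact (grandOrbitCore g U' (topHull X)) :=
  (isCompact_topHull hX).of_isClosed_subset
    (isClosed_grandOrbitCore H.disk'.1 (isCompact_topHull hX).isClosed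
      (H.holo.continuousOn.mono (H.topHull_subset hX hXU)) fun _ ↦ H.nhds_le_map)
    grandOrbitCore_subset

theorem topHull_grandOrbitCore (H : PLSetting g U' U d) (hX : IsCompact X) (hXU : X ⊆ U') :
    topHull (grandOrbitCore g U' (topHull X)) = grandOrbitCore g U' (topHull X) := by
  set Y := grandOrbitCore g U' (topHull X)
  have hY : IsCompact Y := H.isCompact_grandOrbitCore hX hXU
  have hYQ : topHull Y ⊆ topHull X :=
    (topHull_mono grandOrbitCore_subset).trans (topHull_topHull hX).subset
  have hYU : topHull Y ⊆ U' := hYQ.trans (H.topHull_subset hX hXU)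
  exact (subset_grandOrbitCore hYQ
    (mapsTo_topHull hY (H.holo.continuousOn.mono hYU) (fun z hz ↦ H.nhds_le_map (hYU hz))
      mapsTo_grandOrbitCore)
    (inter_preimage_topHull_subset hY H.disk'.1 H.holo.continuousOn
      (H.proper _ (hYU.trans H.subset) (isCompact_topHull hY))
      inter_preimage_grandOrbitCore_subset)).antisymm (subset_topHull Y)

end PLSetting

/-! ### Subharmonic functions -/

/-- Subharmonicity of `s` at `z₀`, in viscosity form: `s` is upper semicontinuous at `z₀`, and
subtracting a harmonic function from `s` creates no local maximum at `z₀` unless the difference is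
constant near `z₀`. Unlike the sub-mean-value property, this visibly passes to maxima and to
push-forwards by open maps. -/
structure SubharmonicAt (s : ℂ → ℝ) (z₀ : ℂ) : Prop where
  upperSemicontinuousAt : UpperSemicontinuousAt s z₀
  eventually_eq : ∀ f : ℂ → ℂ, AnalyticAt ℂ f z₀ → IsLocalMax (fun z ↦ s z - (f z).re) z₀ →
    ∀ᶠ z in 𝓝 z₀, s z - (f z).re = s z₀ - (f z₀).re

namespace SubharmonicAt

variable {s t : ℂ → ℝ} {z₀ : ℂ}

theorem of_le_of_eq (ht : SubharmonicAt t z₀) (hs : UpperSemicontinuousAt s z₀)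
    (hle : ∀ᶠ z in 𝓝 z₀, t z ≤ s z) (heq : t z₀ = s z₀) : SubharmonicAt s z₀ := by
  refine ⟨hs, fun f hf hmax ↦ ?_⟩
  have htf := ht.eventually_eq f hf (by
    filter_upwards [hle, hmax] with z h₁ h₂
    linarith)
  filter_upwards [hle, hmax, htf] with z h₁ h₂ h₃
  linarith

theorem congr (ht : SubharmonicAt t z₀) (h : t =ᶠ[𝓝 z₀] s) : SubharmonicAt s z₀ := by
  refine ht.of_le_of_eq (fun y hy ↦ ?_) h.le h.eq_of_nhds
  filter_upwards [h, ht.upperSemicontinuousAt y (h.eq_of_nhds.trans_lt hy)] with z h₁ h₂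
  exact h₁ ▸ h₂

theorem max (hs : SubharmonicAt s z₀) (ht : SubharmonicAt t z₀) :
    SubharmonicAt (fun z ↦ max (s z) (t z)) z₀ := by
  have husc := hs.upperSemicontinuousAt.sup ht.upperSemicontinuousAt
  rcases le_total (s z₀) (t z₀) with h | h
  · exact ht.of_le_of_eq husc (.of_forall fun z ↦ le_max_right _ _) (max_eq_right h).symm
  · exact hs.of_le_of_eq husc (.of_forall fun z ↦ le_max_left _ _) (max_eq_left h).symm

theorem const (c : ℝ) (z₀ : ℂ) : SubharmonicAt (fun _ ↦ c) z₀ := by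
  refine ⟨upperSemicontinuousAt_const, fun f hf hmax ↦ ?_⟩
  have hnorm : ∀ z, ‖Complex.exp (-f z)‖ = Real.exp (-(f z).re) := fun z ↦ by
    rw [Complex.norm_exp, Complex.neg_re]
  have hexp : IsLocalMax (norm ∘ fun z ↦ Complex.exp (-f z)) z₀ := by
    filter_upwards [hmax] with z hz
    rw [comp_apply, comp_apply, hnorm, hnorm, Real.exp_le_exp]
    linarith
  have hdiff : ∀ᶠ z in 𝓝 z₀, DifferentiableAt ℂ (fun z ↦ Complex.exp (-f z)) z :=
    hf.eventually_analyticAt.mono fun z hz ↦ hz.differentiableAt.neg.cexp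
  filter_upwards [Complex.eventually_eq_of_isLocalMax_norm hdiff hexp] with z hz
  have := congrArg norm hz
  rw [hnorm, hnorm, Real.exp_eq_exp] at this
  linarith

theorem add_re (hs : SubharmonicAt s z₀) {h : ℂ → ℂ} (hh : AnalyticAt ℂ h z₀) :
    SubharmonicAt (fun z ↦ s z + (h z).re) z₀ := by
  refine ⟨hs.upperSemicontinuousAt.add
    (Complex.continuous_re.continuousAt.comp hh.continuousAt).upperSemicontinuousAt,
    fun f hf hmax ↦ ?_⟩
  have hshift : ∀ z, s z + (h z).re - (f z).re = s z - (f z - h z).re := fun z ↦ by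
    rw [Complex.sub_re]
    ring
  simp only [hshift] at hmax ⊢
  exact hs.eventually_eq _ (hf.sub hh) hmax

theorem const_mul (hs : SubharmonicAt s z₀) {c : ℝ} (hc : 0 < c) :
    SubharmonicAt (fun z ↦ c * s z) z₀ := by
  refine ⟨(continuous_const_mul c).continuousAt.comp_upperSemicontinuousAt
    hs.upperSemicontinuousAt (monotone_mul_left_of_nonneg hc.le), fun f hf hmax ↦ ?_⟩
  have hscale : ∀ z, c * s z - (f z).re = c * (s z - (((c⁻¹ : ℝ) : ℂ) * f z).re) := fun z ↦ by
    rw [Complex.re_ofReal_mul]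
    field_simp
  simp only [hscale, IsLocalMax, IsMaxFilter, mul_le_mul_iff_right₀ hc,
    mul_right_inj' hc.ne'] at hmax ⊢
  exact hs.eventually_eq _ (analyticAt_const.mul hf) hmax

theorem add_const (hs : SubharmonicAt s z₀) (c : ℝ) : SubharmonicAt (fun z ↦ s z + c) z₀ :=
  hs.add_re (h := fun _ ↦ (c : ℂ)) analyticAt_const

theorem piecewise {u : ℂ → ℝ} {Ω : Set ℂ} [DecidablePred (· ∈ Ω)] (hΩ : IsOpen Ω)
    (hs : SubharmonicAt s z₀) (hu : z₀ ∈ closure Ω → SubharmonicAt u z₀)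
    (hus : z₀ ∈ frontier Ω → u z₀ ≤ s z₀) :
    SubharmonicAt (Ω.piecewise (fun z ↦ Max.max (s z) (u z)) s) z₀ := by
  set t : ℂ → ℝ := Ω.piecewise (fun z ↦ Max.max (s z) (u z)) s
  have ht_mem : ∀ z ∈ Ω, t z = Max.max (s z) (u z) := fun z ↦ piecewise_eq_of_mem _ _ _
  have ht_notMem : ∀ z ∉ Ω, t z = s z := fun z ↦ piecewise_eq_of_notMem _ _ _
  by_cases hz : z₀ ∈ Ω
  · refine (hs.max (hu (subset_closure hz))).congr ?_
    filter_upwards [hΩ.mem_nhds hz] with z hz using (ht_mem z hz).symm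
  have hst : ∀ z, s z ≤ t z := le_piecewise (fun _ _ ↦ le_max_left _ _) fun _ _ ↦ le_rfl
  refine hs.of_le_of_eq (fun y (hy : t z₀ < y) ↦ ?_) (.of_forall hst) (ht_notMem z₀ hz).symm
  rw [ht_notMem z₀ hz] at hy
  by_cases hzc : z₀ ∈ closure Ω
  · have huy : u z₀ < y := (hus ⟨hzc, fun h ↦ hz (interior_subset h)⟩).trans_lt hy
    filter_upwards [hs.upperSemicontinuousAt y hy, (hu hzc).upperSemicontinuousAt y huy]
      with z h₁ h₂
    by_cases hzΩ : z ∈ Ω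
    · exact (ht_mem z hzΩ).trans_lt (max_lt h₁ h₂)
    · exact (ht_notMem z hzΩ).trans_lt h₁
  · filter_upwards [isClosed_closure.isOpen_compl.mem_nhds hzc,
      hs.upperSemicontinuousAt y hy] with z h₁ h₂
    exact (ht_notMem z fun h ↦ h₁ (subset_closure h)).trans_lt h₂

end SubharmonicAt

theorem exists_analyticAt_re_eq_log_norm {m : ℂ → ℂ} {z₀ : ℂ} (hm : AnalyticAt ℂ m z₀)
    (h₀ : m z₀ ≠ 0) :
    ∃ h : ℂ → ℂ, AnalyticAt ℂ h z₀ ∧ ∀ᶠ z in 𝓝 z₀, (h z).re = Real.log ‖m z‖ := by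
  refine ⟨fun z ↦ Complex.log (m z / m z₀) + (Real.log ‖m z₀‖ : ℂ), ?_, ?_⟩
  · refine AnalyticAt.add (AnalyticAt.clog (hm.div analyticAt_const h₀) ?_) analyticAt_const
    rw [div_self h₀]
    exact Complex.one_mem_slitPlane
  · filter_upwards [hm.continuousAt.eventually_ne h₀] with z hz
    rw [Complex.add_re, Complex.log_re, Complex.ofReal_re, norm_div,
      Real.log_div (norm_ne_zero_iff.2 hz) (norm_ne_zero_iff.2 h₀), sub_add_cancel]

theorem SubharmonicAt.add_mul_log_norm {s : ℂ → ℝ} {m : ℂ → ℂ} {z₀ : ℂ}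
    (hs : SubharmonicAt s z₀) (hm : AnalyticAt ℂ m z₀) (h₀ : m z₀ ≠ 0) (c : ℝ) :
    SubharmonicAt (fun z ↦ s z + c * Real.log ‖m z‖) z₀ := by
  obtain ⟨h, hh, hlog⟩ := exists_analyticAt_re_eq_log_norm hm h₀
  refine (hs.add_re (h := fun z ↦ (c : ℂ) * h z) (analyticAt_const.mul hh)).congr ?_
  filter_upwards [hlog] with z hz
  rw [Complex.re_ofReal_mul, hz]

theorem upperSemicontinuousOn_of_subharmonicAt {s : ℂ → ℝ} {K : Set ℂ}
    (h : ∀ z ∈ K, SubharmonicAt s z) : UpperSemicontinuousOn s K :=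
  fun z hz ↦ (h z hz).upperSemicontinuousAt.upperSemicontinuousWithinAt K

theorem SubharmonicAt.le_of_frontier_le {t : ℂ → ℝ} {O : Set ℂ} (hO : IsOpen O)
    (hOc : IsCompact (closure O)) (ht : ∀ z ∈ closure O, SubharmonicAt t z) {c : ℝ}
    (hc : ∀ z ∈ frontier O, t z ≤ c) : ∀ z ∈ closure O, t z ≤ c := by
  have husc := upperSemicontinuousOn_of_subharmonicAt ht
  intro z hz
  obtain ⟨p, hp, hmax⟩ := husc.exists_isMaxOn ⟨z, hz⟩ hOc
  refine (hmax hz).trans (le_of_not_gt fun hcp ↦ ?_)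
  set E : Set ℂ := closure O ∩ t ⁻¹' Ici (t p)
  have hEO : E ⊆ O := fun w hw ↦ by
    by_contra hwO
    exact (hcp.trans_le hw.2).not_ge (hc w ⟨hw.1, fun hi ↦ hwO (interior_subset hi)⟩)
  have hEopen : IsOpen E := by
    refine isOpen_iff_mem_nhds.2 fun w hw ↦ ?_
    have hwp : t w = t p := le_antisymm (hmax hw.1) hw.2
    have hOw := hO.mem_nhds (hEO hw)
    have hconst := (ht w hw.1).eventually_eq (fun _ ↦ 0) analyticAt_const (by
      filter_upwards [hOw] with v hv
      rw [Complex.zero_re, sub_zero, sub_zero, hwp]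
      exact hmax (subset_closure hv))
    filter_upwards [hconst, hOw] with v hv hvO
    rw [Complex.zero_re, sub_zero, sub_zero, hwp] at hv
    exact ⟨subset_closure hvO, hv.ge⟩
  have hEcompact : IsCompact E := husc.isCompact_inter_preimage_Ici hOc (t p)
  have huniv : E = univ := IsClopen.eq_univ ⟨hEcompact.isClosed, hEopen⟩ ⟨p, hp, le_refl (t p)⟩
  exact noncompact_univ ℂ (huniv ▸ hEcompact)

/-- The competitors for the harmonic measure of `V ∖ F` seen from `∂V`: functions `V → [0, 1]` that
are subharmonic on `V` and vanish on `F`. -/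
structure IsCompetitor (V F : Set ℂ) (s : ℂ → ℝ) : Prop where
  nonneg : ∀ z ∈ V, 0 ≤ s z
  le_one : ∀ z ∈ V, s z ≤ 1
  eq_zero : ∀ z ∈ F, s z = 0
  subharmonicAt : ∀ z ∈ V, SubharmonicAt s z

namespace IsCompetitor

variable {V V' F F' : Set ℂ} {s t u : ℂ → ℝ}

theorem mono (hs : IsCompetitor V F s) (hV : V' ⊆ V) (hF : F' ⊆ F) : IsCompetitor V' F' s :=
  ⟨fun z hz ↦ hs.nonneg z (hV hz), fun z hz ↦ hs.le_one z (hV hz),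
    fun z hz ↦ hs.eq_zero z (hF hz), fun z hz ↦ hs.subharmonicAt z (hV hz)⟩

theorem max (hs : IsCompetitor V F s) (ht : IsCompetitor V F t) :
    IsCompetitor V F (fun z ↦ max (s z) (t z)) :=
  ⟨fun z hz ↦ (hs.nonneg z hz).trans (le_max_left _ _),
    fun z hz ↦ max_le (hs.le_one z hz) (ht.le_one z hz),
    fun z hz ↦ by rw [hs.eq_zero z hz, ht.eq_zero z hz, max_self],
    fun z hz ↦ (hs.subharmonicAt z hz).max (ht.subharmonicAt z hz)⟩

theorem exists_glue (hs : IsCompetitor V F s) {Ω : Set ℂ} (hΩ : IsOpen Ω)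
    (hu : ∀ z ∈ V ∩ closure Ω, SubharmonicAt u z) (hus : ∀ z ∈ V ∩ frontier Ω, u z ≤ s z)
    (hu₁ : ∀ z ∈ V ∩ Ω, u z ≤ 1) (hu₀ : ∀ z ∈ F ∩ Ω, u z ≤ 0) :
    ∃ t, IsCompetitor V F t ∧ (∀ z, s z ≤ t z) ∧ ∀ z ∈ Ω, u z ≤ t z := by
  classical
  set t : ℂ → ℝ := Ω.piecewise (fun z ↦ Max.max (s z) (u z)) s
  have ht_mem : ∀ z ∈ Ω, t z = Max.max (s z) (u z) := fun z ↦ piecewise_eq_of_mem _ _ _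
  have ht_notMem : ∀ z ∉ Ω, t z = s z := fun z ↦ piecewise_eq_of_notMem _ _ _
  have hst : ∀ z, s z ≤ t z := le_piecewise (fun _ _ ↦ le_max_left _ _) fun _ _ ↦ le_rfl
  refine ⟨t, ⟨fun z hz ↦ (hs.nonneg z hz).trans (hst z), fun z hz ↦ ?_, fun z hz ↦ ?_,
    fun z hz ↦ (hs.subharmonicAt z hz).piecewise hΩ (fun h ↦ hu z ⟨hz, h⟩)
      fun h ↦ hus z ⟨hz, h⟩⟩, hst, fun z hz ↦ (le_max_right _ _).trans_eq (ht_mem z hz).symm⟩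
  · by_cases hzΩ : z ∈ Ω
    · exact (ht_mem z hzΩ).trans_le (max_le (hs.le_one z hz) (hu₁ z ⟨hz, hzΩ⟩))
    · exact (ht_notMem z hzΩ).trans_le (hs.le_one z hz)
  · by_cases hzΩ : z ∈ Ω
    · rw [ht_mem z hzΩ, hs.eq_zero z hz, max_eq_left (hu₀ z ⟨hz, hzΩ⟩)]
    · rw [ht_notMem z hzΩ, hs.eq_zero z hz]

end IsCompetitor

/-! ### Gaps between competitors -/

/-- The push-forward of `s` under `g : V → ℂ`: its value at `w` is the largest value of `s` on the
fibre over `w`, provided that maximum is attained. -/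
def fiberMax (g : ℂ → ℂ) (V : Set ℂ) (s : ℂ → ℝ) (w : ℂ) : ℝ := sSup (s '' (V ∩ g ⁻¹' {w}))

namespace PLSetting

variable {g : ℂ → ℂ} {U' U F : Set ℂ} {d : ℕ} {s : ℂ → ℝ} {w z : ℂ}

theorem exists_eq_fiberMax (H : PLSetting g U' U d) (hs : ∀ z ∈ U', SubharmonicAt s z)
    (hw : w ∈ U) :
    ∃ ζ ∈ U', g ζ = w ∧ fiberMax g U' s w = s ζ ∧ ∀ z ∈ U', g z = w → s z ≤ s ζ := by
  have hfibre : IsCompact (U' ∩ g ⁻¹' {w}) :=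
    H.proper _ (singleton_subset_iff.2 hw) isCompact_singleton
  obtain ⟨ζ, hζ, hmax⟩ := (upperSemicontinuousOn_of_subharmonicAt
    fun z hz ↦ hs z hz.1).exists_isMaxOn (H.deg.1 w hw) hfibre
  exact ⟨ζ, hζ.1, hζ.2, IsGreatest.csSup_eq ⟨mem_image_of_mem s hζ, forall_mem_image.2 hmax⟩,
    fun z hz hzw ↦ hmax ⟨hz, hzw⟩⟩

theorem le_fiberMax (H : PLSetting g U' U d) (hs : ∀ z ∈ U', SubharmonicAt s z) (hz : z ∈ U') :
    s z ≤ fiberMax g U' s (g z) := by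
  obtain ⟨ζ, -, -, hζs, hmax⟩ := H.exists_eq_fiberMax hs (H.mapsTo hz)
  exact (hmax z hz rfl).trans hζs.ge

theorem upperSemicontinuousAt_fiberMax (H : PLSetting g U' U d)
    (hs : ∀ z ∈ U', SubharmonicAt s z) (hw : w ∈ U) :
    UpperSemicontinuousAt (fiberMax g U' s) w := by
  intro y hy
  obtain ⟨ε, hε, hball⟩ := nhds_basis_closedBall.mem_iff.1 (H.disk.1.mem_nhds hw)
  have hfibres : IsCompact (U' ∩ g ⁻¹' closedBall w ε) :=
    H.proper _ hball (isCompact_closedBall w ε)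
  have hlarge : IsCompact (U' ∩ g ⁻¹' closedBall w ε ∩ s ⁻¹' Ici y) :=
    (upperSemicontinuousOn_of_subharmonicAt fun z hz ↦ hs z hz.1).isCompact_inter_preimage_Ici
      hfibres y
  have himage := hlarge.image_of_continuousOn (H.holo.continuousOn.mono fun z hz ↦ hz.1.1)
  have hw_notMem : w ∉ g '' (U' ∩ g ⁻¹' closedBall w ε ∩ s ⁻¹' Ici y) := by
    rintro ⟨z, ⟨⟨hz, -⟩, hyz⟩, rfl⟩
    exact (hy.trans_le hyz).not_ge (H.le_fiberMax hs hz)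
  filter_upwards [himage.isClosed.isOpen_compl.mem_nhds hw_notMem, closedBall_mem_nhds w hε]
    with v hv hvball
  obtain ⟨ζ, hζ, rfl, hζs, -⟩ := H.exists_eq_fiberMax hs (hball hvball)
  rw [hζs]
  exact lt_of_not_ge fun hyζ ↦ hv ⟨ζ, ⟨⟨hζ, hvball⟩, hyζ⟩, rfl⟩

theorem subharmonicAt_fiberMax (H : PLSetting g U' U d) (hs : ∀ z ∈ U', SubharmonicAt s z)
    (hw : w ∈ U) : SubharmonicAt (fiberMax g U' s) w := by
  refine ⟨H.upperSemicontinuousAt_fiberMax hs hw, fun f hf hmax ↦ ?_⟩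
  obtain ⟨ζ, hζ, rfl, hζs, -⟩ := H.exists_eq_fiberMax hs hw
  have hU' := H.disk'.1.mem_nhds hζ
  have hg : AnalyticAt ℂ g ζ := H.holo.analyticAt hU'
  rw [hζs]
  have hconst := (hs ζ hζ).eventually_eq (fun z ↦ f (g z)) (hf.fun_comp hg) (by
    filter_upwards [hg.continuousAt.eventually hmax, hU'] with z hz hzU
    linarith [H.le_fiberMax hs hzU])
  filter_upwards [hmax, H.nhds_le_map hζ (image_mem_map (inter_mem hconst hU'))]
  rintro _ hle ⟨z, ⟨hz, hzU⟩, rfl⟩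
  have hz' : s z - (f (g z)).re = s ζ - (f (g ζ)).re := hz
  linarith [H.le_fiberMax hs hzU]

theorem isCompetitor_fiberMax (H : PLSetting g U' U d) (hFU : F ⊆ U) (hF : U' ∩ g ⁻¹' F ⊆ F)
    (hs : IsCompetitor U' F s) : IsCompetitor U F (fiberMax g U' s) := by
  have hattained := fun w ↦ H.exists_eq_fiberMax (w := w) hs.subharmonicAt
  refine ⟨fun w hw ↦ ?_, fun w hw ↦ ?_, fun w hw ↦ ?_,
    fun w hw ↦ H.subharmonicAt_fiberMax hs.subharmonicAt hw⟩
  · obtain ⟨ζ, hζ, -, hζs, -⟩ := hattained w hw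
    exact hζs ▸ hs.nonneg ζ hζ
  · obtain ⟨ζ, hζ, -, hζs, -⟩ := hattained w hw
    exact hζs ▸ hs.le_one ζ hζ
  · obtain ⟨ζ, hζ, rfl, hζs, -⟩ := hattained w (hFU hw)
    exact hζs ▸ hs.eq_zero ζ (hF ⟨hζ, hw⟩)

end PLSetting

/-- The harmonic function on the annulus `ρ < ‖z - p‖ < R` with boundary values `1` on the inner
and `0` on the outer circle. -/
def annulusHarmonic (p : ℂ) (ρ R : ℝ) (z : ℂ) : ℝ :=
  (Real.log R - Real.log ‖z - p‖) / (Real.log R - Real.log ρ)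

section Annulus

variable {p z : ℂ} {ρ R r η : ℝ} {s t : ℂ → ℝ}

theorem annulusHarmonic_of_mem_sphere_inner (hρ : 0 < ρ) (hR : ρ < R) (hz : z ∈ sphere p ρ) :
    annulusHarmonic p ρ R z = 1 := by
  rw [annulusHarmonic, mem_sphere_iff_norm.1 hz]
  exact div_self (sub_pos.2 (Real.log_lt_log hρ hR)).ne'

theorem annulusHarmonic_of_mem_sphere_outer (hz : z ∈ sphere p R) :
    annulusHarmonic p ρ R z = 0 := by
  rw [annulusHarmonic, mem_sphere_iff_norm.1 hz, sub_self, zero_div]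

theorem le_annulusHarmonic (hρ : 0 < ρ) (hR : ρ < R) (hρz : ρ ≤ ‖z - p‖) (hzr : ‖z - p‖ ≤ r) :
    (Real.log R - Real.log r) / (Real.log R - Real.log ρ) ≤ annulusHarmonic p ρ R z :=
  div_le_div_of_nonneg_right (sub_le_sub_left (Real.log_le_log (hρ.trans_le hρz) hzr) _)
    (sub_pos.2 (Real.log_lt_log hρ hR)).le

theorem SubharmonicAt.add_mul_annulusHarmonic (hs : SubharmonicAt s z) (hz : z ≠ p) :
    SubharmonicAt (fun w ↦ s w + η * annulusHarmonic p ρ R w) z := by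
  refine ((hs.add_mul_log_norm (m := fun w ↦ w - p) (by fun_prop) (sub_ne_zero.2 hz)
    (-(η / (Real.log R - Real.log ρ)))).add_const
      (η * Real.log R / (Real.log R - Real.log ρ))).congr (.of_forall fun w ↦ ?_)
  simp only [annulusHarmonic]
  ring

theorem isOpen_annulus : IsOpen (ball p R \ closedBall p ρ) :=
  isOpen_ball.sdiff isClosed_closedBall

theorem closure_annulus_subset : closure (ball p R \ closedBall p ρ) ⊆ closedBall p R \ ball p ρ :=
  closure_minimal (sdiff_subset_sdiff ball_subset_closedBall ball_subset_closedBall)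
    (isClosed_closedBall.sdiff isOpen_ball)

theorem frontier_annulus_subset :
    frontier (ball p R \ closedBall p ρ) ⊆ sphere p ρ ∪ sphere p R := by
  rintro z ⟨hz, hzi⟩
  rw [isOpen_annulus.interior_eq] at hzi
  obtain ⟨hzR, hzρ⟩ := closure_annulus_subset hz
  rcases (mem_closedBall.1 hzR).lt_or_eq with hlt | heq
  · exact .inl (le_antisymm (of_not_not fun h ↦ hzi ⟨hlt, h⟩) (not_lt.1 hzρ))
  · exact .inr heq

theorem add_mul_annulusHarmonic_le_one (hρ : 0 < ρ) (hR : ρ < R)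
    (hsub : ∀ z ∈ closedBall p R, SubharmonicAt s z) (hs₁ : ∀ z ∈ closedBall p R, s z ≤ 1)
    (hsη : ∀ z ∈ sphere p ρ, s z + η ≤ 1) :
    ∀ z ∈ ball p R \ closedBall p ρ, s z + η * annulusHarmonic p ρ R z ≤ 1 := by
  intro z hz
  refine SubharmonicAt.le_of_frontier_le (t := fun z ↦ s z + η * annulusHarmonic p ρ R z)
    isOpen_annulus (isBounded_ball.subset sdiff_subset).isCompact_closure (fun w hw ↦ ?_)
    (fun w hw ↦ ?_) z (subset_closure hz)
  · obtain ⟨hwR, hwρ⟩ := closure_annulus_subset hw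
    refine (hsub w hwR).add_mul_annulusHarmonic ?_
    rintro rfl
    exact hwρ (mem_ball_self hρ)
  · rcases frontier_annulus_subset hw with hw | hw
    · rw [annulusHarmonic_of_mem_sphere_inner hρ hR hw, mul_one]
      exact hsη w hw
    · rw [annulusHarmonic_of_mem_sphere_outer hw, mul_zero, add_zero]
      exact hs₁ w (sphere_subset_closedBall hw)

end Annulus

/-- Uniformly over all competitors `s` for `(U, F)`, some competitor for `(U', F')` dominates `s`
and exceeds it on `N` by a definite amount. -/
def HasGap (U F U' F' N : Set ℂ) : Prop :=
  ∃ η > 0, ∀ s, IsCompetitor U F s →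
    ∃ t, IsCompetitor U' F' t ∧ (∀ z ∈ U', s z ≤ t z) ∧ ∀ z ∈ N, s z + η ≤ t z

namespace HasGap

variable {U F U' F' N N' K S : Set ℂ} {p : ℂ}

theorem mono (h : HasGap U F U' F' N) (hN : N' ⊆ N) : HasGap U F U' F' N' := by
  obtain ⟨η, hη, h⟩ := h
  refine ⟨η, hη, fun s hs ↦ ?_⟩
  obtain ⟨t, ht, hst, hgap⟩ := h s hs
  exact ⟨t, ht, hst, fun z hz ↦ hgap z (hN hz)⟩

theorem union (h : HasGap U F U' F' N) (h' : HasGap U F U' F' N') :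
    HasGap U F U' F' (N ∪ N') := by
  obtain ⟨η, hη, h⟩ := h
  obtain ⟨η', hη', h'⟩ := h'
  refine ⟨min η η', lt_min hη hη', fun s hs ↦ ?_⟩
  obtain ⟨t, ht, hst, hgap⟩ := h s hs
  obtain ⟨t', ht', -, hgap'⟩ := h' s hs
  refine ⟨_, ht.max ht', fun z hz ↦ (hst z hz).trans (le_max_left _ _), ?_⟩
  rintro z (hz | hz)
  · exact le_max_of_le_left (by linarith [hgap z hz, min_le_left η η'])
  · exact le_max_of_le_right (by linarith [hgap' z hz, min_le_right η η'])

theorem of_isCompact (hU : U' ⊆ U) (hF : F' ⊆ F) (hK : IsCompact K)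
    (h : ∀ z ∈ K, ∃ N ∈ 𝓝 z, HasGap U F U' F' N) : HasGap U F U' F' K := by
  refine hK.induction_on ⟨1, one_pos, fun s hs ↦ ⟨s, hs.mono hU hF, fun _ _ ↦ le_rfl, by simp⟩⟩
    (fun _ _ hAB h ↦ h.mono hAB) (fun _ _ h h' ↦ h.union h') fun z hz ↦ ?_
  obtain ⟨N, hN, hgap⟩ := h z hz
  exact ⟨N, mem_nhdsWithin_of_mem_nhds hN, hgap⟩

theorem closedBall_of_closedBall (hU : U' ⊆ U) {ρ r R : ℝ} (hρ : 0 < ρ) (hρr : ρ ≤ r)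
    (hrR : r < R) (hball : closedBall p R ⊆ U' \ F') (h : HasGap U F U' F' (closedBall p ρ)) :
    HasGap U F U' F' (closedBall p r) := by
  obtain ⟨η, hη, h⟩ := h
  have hρR := hρr.trans_lt hrR
  have hsub : closedBall p ρ ⊆ closedBall p R := closedBall_subset_closedBall hρR.le
  set l := (Real.log R - Real.log r) / (Real.log R - Real.log ρ)
  have hl : 0 < l := div_pos (sub_pos.2 (Real.log_lt_log (hρ.trans_le hρr) hrR))
    (sub_pos.2 (Real.log_lt_log hρ hρR))
  have hl₁ : l ≤ 1 := (div_le_one (sub_pos.2 (Real.log_lt_log hρ hρR))).2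
    (sub_le_sub_left (Real.log_le_log hρ hρr) _)
  refine ⟨η * l, mul_pos hη hl, fun s hs ↦ ?_⟩
  obtain ⟨t, ht, hst, hgap⟩ := h s hs
  have hsη : ∀ z ∈ closedBall p ρ, s z + η ≤ 1 := fun z hz ↦
    (hgap z hz).trans (ht.le_one z (hball (hsub hz)).1)
  obtain ⟨t', ht', htt', hann⟩ := ht.exists_glue isOpen_annulus
    (u := fun z ↦ s z + η * annulusHarmonic p ρ R z)
    (fun z hz ↦ (hs.subharmonicAt z (hU hz.1)).add_mul_annulusHarmonic (by
      rintro rfl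
      exact (closure_annulus_subset hz.2).2 (mem_ball_self hρ)))
    (fun z hz ↦ by
      rcases frontier_annulus_subset hz.2 with hzρ | hzR
      · rw [annulusHarmonic_of_mem_sphere_inner hρ hρR hzρ, mul_one]
        exact hgap z (sphere_subset_closedBall hzρ)
      · rw [annulusHarmonic_of_mem_sphere_outer hzR, mul_zero, add_zero]
        exact hst z hz.1)
    (fun z hz ↦ add_mul_annulusHarmonic_le_one hρ hρR
      (fun w hw ↦ hs.subharmonicAt w (hU (hball hw).1)) (fun w hw ↦ hs.le_one w (hU (hball hw).1))
      (fun w hw ↦ hsη w (sphere_subset_closedBall hw)) z hz.2)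
    (fun z hz ↦ absurd hz.1 (hball (ball_subset_closedBall hz.2.1)).2)
  refine ⟨t', ht', fun z hz ↦ (hst z hz).trans (htt' z), fun z hz ↦ ?_⟩
  by_cases hzρ : z ∈ closedBall p ρ
  · linarith [hgap z hzρ, htt' z, mul_le_of_le_one_right hη.le hl₁]
  · have hzR : z ∈ ball p R := closedBall_subset_ball hrR hz
    rw [mem_closedBall_iff_norm] at hz hzρ
    have hl_le := le_annulusHarmonic hρ hρR (not_le.1 hzρ).le hz
    linarith [hann z ⟨hzR, by rwa [mem_closedBall_iff_norm]⟩, mul_le_mul_of_nonneg_left hl_le hη.le]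

theorem exists_mem_nhds_of_isPreconnected (hU' : IsOpen U') (hU : U' ⊆ U) (hF' : IsClosed F')
    (hS : IsPreconnected S) (hSU : S ⊆ U' \ F')
    (h : ∃ p ∈ S, ∃ N ∈ 𝓝 p, HasGap U F U' F' N) :
    ∀ z ∈ S, ∃ N ∈ 𝓝 z, HasGap U F U' F' N := by
  set G : Set ℂ := {z | ∃ N ∈ 𝓝 z, HasGap U F U' F' N}
  have hG : IsOpen G := isOpen_iff_mem_nhds.2 fun z ⟨N, hN, hgap⟩ ↦ by
    filter_upwards [eventually_mem_nhds_iff.2 hN] with w hw using ⟨N, hw, hgap⟩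
  suffices hcl : closure G ∩ S ⊆ G from hS.subset_of_closure_inter_subset hG h hcl
  rintro z ⟨hzG, hzS⟩
  obtain ⟨ε, hε, hball⟩ := nhds_basis_closedBall.mem_iff.1
    ((hU'.sdiff hF').mem_nhds (hSU hzS))
  obtain ⟨p, ⟨N, hN, hgap⟩, hzp⟩ := Metric.mem_closure_iff.1 hzG (ε / 3) (by positivity)
  obtain ⟨δ, hδ, hδN⟩ := nhds_basis_closedBall.mem_iff.1 hN
  have hpε : closedBall p (2 * ε / 3) ⊆ closedBall z ε :=
    closedBall_subset_closedBall' (by rw [dist_comm]; linarith)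
  refine ⟨closedBall p (ε / 3), mem_of_superset (isOpen_ball.mem_nhds hzp) ball_subset_closedBall,
    closedBall_of_closedBall hU (lt_min hδ (by positivity)) (min_le_right δ (ε / 3))
      (by linarith) (hpε.trans hball) (hgap.mono ?_)⟩
  exact (closedBall_subset_closedBall (min_le_left _ _)).trans hδN

end HasGap

theorem exists_pos_forall_isCompetitor_le_one_sub {V F K : Set ℂ} (hV : IsOpen V)
    (hVc : IsPreconnected V) (hF : (V ∩ interior F).Nonempty) (hK : IsCompact K) (hKV : K ⊆ V) :
    ∃ ε > 0, ∀ s, IsCompetitor V F s → ∀ z ∈ K, s z ≤ 1 - ε := by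
  have hstart : ∃ p ∈ V, ∃ N ∈ 𝓝 p, HasGap V F V ∅ N := by
    obtain ⟨p, hpV, hpF⟩ := hF
    refine ⟨p, hpV, F, mem_interior_iff_mem_nhds.1 hpF, 1, one_pos, fun s hs ↦ ⟨fun _ ↦ 1,
      ⟨fun _ _ ↦ zero_le_one, fun _ _ ↦ le_rfl, by simp, fun z _ ↦ .const 1 z⟩, hs.le_one,
      fun z hz ↦ ?_⟩⟩
    rw [hs.eq_zero z hz, zero_add]
  obtain ⟨ε, hε, hgap⟩ : HasGap V F V ∅ K :=
    .of_isCompact Subset.rfl (empty_subset F) hK fun z hz ↦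
      HasGap.exists_mem_nhds_of_isPreconnected hV Subset.rfl isClosed_empty hVc
        (by rw [sdiff_empty]) hstart z (hKV hz)
  refine ⟨ε, hε, fun s hs z hz ↦ ?_⟩
  obtain ⟨t, ht, -, hst⟩ := hgap s hs
  linarith [hst z hz, ht.le_one z (hKV hz)]

/-! ### Barriers -/

section SquareRootBranch

variable {V : Set ℂ} {b p z : ℂ} {σ : ℂ → ℂ}

theorem IsTopDisk.exists_sq_eq_sub (hV : IsTopDisk V) (hb : b ∉ V) :
    ∃ σ : ℂ → ℂ, (∀ z, σ z ^ 2 = z - b) ∧ ∀ z ∈ V, AnalyticAt ℂ σ z ∧ deriv σ z ≠ 0 := by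
  obtain ⟨σ, hσc, hσ⟩ := Complex.exists_continuousOn_pow_eq (U := V) hV.2.2 hV.1
    (g := fun z ↦ z - b) (by fun_prop)
    (by rintro ⟨z, hz, h⟩; exact hb (sub_eq_zero.1 h ▸ hz)) two_ne_zero
  have hσ₀ : ∀ z ∈ V, 2 * σ z ≠ 0 := fun z hz h ↦ hb <| by
    have hzb := hσ z
    rw [(mul_eq_zero.1 h).resolve_left two_ne_zero, zero_pow two_ne_zero] at hzb
    exact sub_eq_zero.1 hzb.symm ▸ hz
  have hderiv : ∀ z ∈ V, HasDerivAt σ (2 * σ z)⁻¹ z := fun z hz ↦ by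
    refine HasDerivAt.of_local_left_inverse (f := fun w ↦ w ^ 2 + b)
      (hσc.continuousAt (hV.1.mem_nhds hz)) ?_ (hσ₀ z hz) (.of_forall fun w ↦ by simp [hσ w])
    simpa using (hasDerivAt_pow 2 (σ z)).add_const b
  have hdiff : DifferentiableOn ℂ σ V := fun z hz ↦
    (hderiv z hz).differentiableAt.differentiableWithinAt
  refine ⟨σ, hσ, fun z hz ↦ ⟨hdiff.analyticAt (hV.1.mem_nhds hz), ?_⟩⟩
  rw [(hderiv z hz).deriv]
  exact inv_ne_zero (hσ₀ z hz)

/-- A branch of the square root omits a neighbourhood of `-σ p`, since it is open and `σ V` and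
`-σ V` are disjoint. -/
theorem exists_pos_le_norm_add_of_sq_eq_sub (hb : b ∉ V) (hσ : ∀ z, σ z ^ 2 = z - b)
    (hV : V ∈ 𝓝 p) (hσp : AnalyticAt ℂ σ p) (hσp' : deriv σ p ≠ 0) :
    ∃ ρ > 0, ∀ z ∈ V, ρ ≤ ‖σ z + σ p‖ := by
  have himage : σ '' V ∈ 𝓝 (σ p) := by
    rw [← hσp.hasStrictDerivAt.map_nhds_eq hσp']
    exact image_mem_map hV
  obtain ⟨ρ, hρ, hball⟩ := Metric.mem_nhds_iff.1 himage
  refine ⟨ρ, hρ, fun z hz ↦ not_lt.1 fun hlt ↦ ?_⟩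
  obtain ⟨a, _, haz⟩ := hball (show -σ z ∈ ball (σ p) ρ by
    rwa [mem_ball_iff_norm, ← norm_neg, neg_sub, sub_neg_eq_add, add_comm])
  have hsq : a - b = z - b := by rw [← hσ, ← hσ, haz, neg_sq]
  obtain rfl : a = z := sub_left_injective hsq
  have hσa : σ a = 0 := self_eq_neg.1 haz
  have hab := hσ a
  rw [hσa, zero_pow two_ne_zero] at hab
  exact hb (sub_eq_zero.1 hab.symm ▸ hz)

theorem norm_sub_le_of_norm_add_lt (hσ : ∀ z, σ z ^ 2 = z - b)
    (h : ‖σ z + σ p‖ < 2 * ‖σ p‖) : ‖z - b‖ ≤ 9 * ‖p - b‖ := by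
  have hσz : ‖σ z‖ ≤ 3 * ‖σ p‖ := by
    have htriangle := norm_sub_le (σ z + σ p) (σ p)
    rw [add_sub_cancel_right] at htriangle
    linarith
  rw [← hσ, ← hσ, norm_pow, norm_pow]
  nlinarith [norm_nonneg (σ z)]

theorem norm_add_lt_of_norm_sub_lt (hσ : ∀ z, σ z ^ 2 = z - b) (h : ‖z - b‖ < ‖p - b‖) :
    ‖σ z + σ p‖ < 2 * ‖σ p‖ := by
  rw [← hσ, ← hσ, norm_pow, norm_pow] at h
  linarith [norm_add_le (σ z) (σ p), lt_of_pow_lt_pow_left₀ 2 (norm_nonneg _) h]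

end SquareRootBranch

/-- `f = 2 σ p / (σ + σ p)` for a branch `σ` of the square root of `z - b` and a point `p` of `V`
close to `b`. -/
theorem IsTopDisk.exists_barrier {V : Set ℂ} (hV : IsTopDisk V) {b : ℂ} (hb : b ∈ frontier V)
    {r : ℝ} (hr : 0 < r) :
    ∃ f : ℂ → ℂ, (∀ z ∈ V, AnalyticAt ℂ f z ∧ f z ≠ 0) ∧ (∃ M, ∀ z ∈ V, ‖f z‖ ≤ M) ∧
      (∀ z ∈ V, 1 < ‖f z‖ → z ∈ closedBall b r) ∧ ∃ p ∈ V, 1 < ‖f p‖ := by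
  rw [hV.1.frontier_eq] at hb
  obtain ⟨σ, hσ, hσa⟩ := hV.exists_sq_eq_sub hb.2
  obtain ⟨p, hp, hpb⟩ := Metric.mem_closure_iff.1 hb.1 (r / 9) (by positivity)
  have hpb₀ : 0 < ‖p - b‖ := norm_pos_iff.2 (sub_ne_zero.2 fun h ↦ hb.2 (h ▸ hp))
  obtain ⟨q, hq, hqb⟩ := Metric.mem_closure_iff.1 hb.1 ‖p - b‖ hpb₀
  rw [dist_comm, dist_eq_norm] at hpb hqb
  obtain ⟨ρ, hρ, hρσ⟩ := exists_pos_le_norm_add_of_sq_eq_sub hb.2 hσ (hV.1.mem_nhds hp)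
    (hσa p hp).1 (hσa p hp).2
  have hne : ∀ z ∈ V, 0 < ‖σ z + σ p‖ := fun z hz ↦ hρ.trans_le (hρσ z hz)
  have hσp : σ p ≠ 0 := fun h ↦ by simp [← hσ, h] at hpb₀
  have hnorm : ∀ z, ‖2 * σ p / (σ z + σ p)‖ = 2 * ‖σ p‖ / ‖σ z + σ p‖ := fun z ↦ by
    rw [norm_div, norm_mul, Complex.norm_ofNat]
  refine ⟨fun z ↦ 2 * σ p / (σ z + σ p), fun z hz ↦ ⟨?_, ?_⟩,
    ⟨2 * ‖σ p‖ / ρ, fun z hz ↦ ?_⟩, fun z hz h ↦ ?_, q, hq, ?_⟩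
  · exact analyticAt_const.div ((hσa z hz).1.add analyticAt_const) (norm_pos_iff.1 (hne z hz))
  · exact div_ne_zero (mul_ne_zero two_ne_zero hσp) (norm_pos_iff.1 (hne z hz))
  · rw [hnorm]
    exact div_le_div_of_nonneg_left (by positivity) hρ (hρσ z hz)
  · rw [hnorm, one_lt_div (hne z hz)] at h
    rw [mem_closedBall_iff_norm]
    linarith [norm_sub_le_of_norm_add_lt hσ h]
  · rw [hnorm, one_lt_div (hne q hq)]
    exact norm_add_lt_of_norm_sub_lt hσ hqb

theorem exists_mem_nhds_hasGap_of_log_norm {U' U F : Set ℂ} (hUU : U' ⊆ U) {f : ℂ → ℂ} {c : ℝ}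
    (hc : 0 < c) (hf : ∀ z ∈ U', AnalyticAt ℂ f z ∧ f z ≠ 0)
    (hs₁ : ∀ s, IsCompetitor U F s → ∀ z ∈ U', s z + c * Real.log ‖f z‖ ≤ 1)
    (hF : ∀ z ∈ F, ‖f z‖ ≤ 1) {p : ℂ} (hp : p ∈ U') (hfp : 1 < ‖f p‖) :
    ∃ N ∈ 𝓝 p, HasGap U F U' F N := by
  have hlog_cont : ContinuousAt (fun z ↦ Real.log ‖f z‖) p :=
    (hf p hp).1.continuousAt.norm.log (norm_ne_zero_iff.2 (hf p hp).2)
  have hlogp := Real.log_pos hfp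
  refine ⟨_, hlog_cont.eventually (lt_mem_nhds (half_lt_self hlogp)),
    c * (Real.log ‖f p‖ / 2), by positivity, fun s hs ↦ ?_⟩
  obtain ⟨t, ht, hst, hut⟩ := (hs.mono hUU Subset.rfl).exists_glue isOpen_univ
    (u := fun z ↦ s z + c * Real.log ‖f z‖)
    (fun z hz ↦ (hs.subharmonicAt z (hUU hz.1)).add_mul_log_norm (hf z hz.1).1 (hf z hz.1).2 c)
    (by simp) (fun z hz ↦ hs₁ s hs z hz.1)
    (fun z hz ↦ by
      rw [hs.eq_zero z hz.1, zero_add]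
      exact mul_nonpos_of_nonneg_of_nonpos hc.le (Real.log_nonpos (norm_nonneg _) (hF z hz.1)))
  refine ⟨t, ht, fun z _ ↦ hst z, fun z hz ↦ ?_⟩
  linarith [hut z (mem_univ z), mul_le_mul_of_nonneg_left (le_of_lt hz) hc.le]

theorem exists_mem_nhds_hasGap_of_ne {U' U K : Set ℂ} (hU' : IsTopDisk U') (hU : IsTopDisk U)
    (hUU : U' ⊆ U) (hne : U' ≠ U) (hK : IsCompact K) (hKU : K ⊆ U') :
    ∃ p ∈ U' \ K, ∀ F ⊆ K, (interior F).Nonempty → ∃ N ∈ 𝓝 p, HasGap U F U' F N := by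
  obtain ⟨b, hbU, hb⟩ : (U ∩ frontier U').Nonempty := by
    by_contra! hdisj
    exact hne (hUU.antisymm (subset_of_disjoint_frontier hU.2.1.isPreconnected
      (by rw [inter_eq_self_of_subset_right hUU]; exact hU'.2.1.nonempty)
      (disjoint_iff_inter_eq_empty.2 hdisj)))
  have hbK : b ∉ K := fun h ↦ (hU'.1.frontier_eq ▸ hb).2 (hKU h)
  obtain ⟨r, hr, hrb⟩ := Metric.nhds_basis_closedBall.mem_iff.1
    ((hU.1.sdiff hK.isClosed).mem_nhds ⟨hbU, hbK⟩)
  obtain ⟨f, hf, ⟨M, hM⟩, hfr, p, hp, hfp⟩ := hU'.exists_barrier hb hr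
  have hlogM : 0 < Real.log M := Real.log_pos (hfp.trans_le (hM p hp))
  refine ⟨p, ⟨hp, (hrb (hfr p hp hfp)).2⟩, fun F hFK hF ↦ ?_⟩
  obtain ⟨ε, hε, hs_le⟩ := exists_pos_forall_isCompetitor_le_one_sub hU.1 hU.2.1.isPreconnected
    (hF.mono fun z hz ↦ ⟨hUU (hKU (hFK (interior_subset hz))), hz⟩)
    (isCompact_closedBall b r) fun z hz ↦ (hrb hz).1
  have hc : 0 < ε / Real.log M := div_pos hε hlogM
  refine exists_mem_nhds_hasGap_of_log_norm hUU hc hf (fun s hs z hz ↦ ?_)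
    (fun z hz ↦ not_lt.1 fun h ↦ (hrb (hfr z (hKU (hFK hz)) h)).2 (hFK hz)) hp hfp
  by_cases hzr : z ∈ closedBall b r
  · have hlog := mul_le_mul_of_nonneg_left
      (Real.log_le_log (norm_pos_iff.2 (hf z hz).2) (hM z hz)) hc.le
    rw [div_mul_cancel₀ ε hlogM.ne'] at hlog
    linarith [hs_le s hs z hzr]
  · have hlog := mul_nonpos_of_nonneg_of_nonpos hc.le
      (Real.log_nonpos (norm_nonneg _) (not_lt.1 fun h ↦ hzr (hfr z hz h)))
    linarith [hs.le_one z (hUU hz)]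

namespace PLSetting

variable {g : ℂ → ℂ} {U' U F Q V₀ : Set ℂ} {d : ℕ}

theorem exists_forall_isCompetitor_one_add_mul_le (H : PLSetting g U' U d) (hV₀ : IsOpen V₀)
    (hcl : IsCompact (closure V₀)) (hclU : closure V₀ ⊆ U') (hFV : F ⊆ V₀)
    (hF : U' ∩ g ⁻¹' F ⊆ F) (hgap : HasGap U F U' F (frontier V₀)) :
    ∃ η > 0, ∀ s, IsCompetitor U F s →
      ∃ t, IsCompetitor U F t ∧ ∀ z ∈ V₀, (1 + η) * s z ≤ t (g z) := by
  have hVU : V₀ ⊆ U' := subset_closure.trans hclU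
  obtain ⟨η, hη, hgap⟩ := hgap
  refine ⟨η, hη, fun s hs ↦ ?_⟩
  obtain ⟨t, ht, -, hst⟩ := hgap s hs
  have hs_le : ∀ z ∈ closure V₀, s z ≤ 1 - η :=
    SubharmonicAt.le_of_frontier_le hV₀ hcl
      (fun z hz ↦ hs.subharmonicAt z (H.subset (hclU hz)))
      fun z hz ↦ by linarith [hst z hz, ht.le_one z (hclU (frontier_subset_closure hz))]
  obtain ⟨t', ht', -, hut'⟩ := ht.exists_glue hV₀ (u := fun z ↦ (1 + η) * s z)
    (fun z hz ↦ (hs.subharmonicAt z (H.subset hz.1)).const_mul (by positivity))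
    (fun z hz ↦ by nlinarith [hst z hz.2, hs.le_one z (H.subset hz.1)])
    (fun z hz ↦ by nlinarith [hs_le z (subset_closure hz.2)])
    (fun z hz ↦ by rw [hs.eq_zero z hz.1, mul_zero])
  exact ⟨fiberMax g U' t', H.isCompetitor_fiberMax ((hFV.trans hVU).trans H.subset) hF ht',
    fun z hz ↦ (hut' z hz).trans (H.le_fiberMax ht'.subharmonicAt (hVU hz))⟩

theorem isCompetitor_nonpos_of_hasGap_frontier (H : PLSetting g U' U d) (hV₀ : IsOpen V₀)
    (hcl : IsCompact (closure V₀)) (hclU : closure V₀ ⊆ U') (hQV : Q ⊆ V₀) (hgQ : MapsTo g Q Q)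
    (hFV : F ⊆ V₀) (hF : U' ∩ g ⁻¹' F ⊆ F) (hgap : HasGap U F U' F (frontier V₀))
    {s : ℂ → ℝ} (hs : IsCompetitor U F s) : ∀ z ∈ Q, s z ≤ 0 := by
  obtain ⟨η, hη, hstep⟩ := H.exists_forall_isCompetitor_one_add_mul_le hV₀ hcl hclU hFV hF hgap
  have hiter : ∀ (n : ℕ) s, IsCompetitor U F s → ∀ z ∈ Q, (1 + η) ^ n * s z ≤ 1 := by
    intro n
    induction n with
    | zero =>
      intro s hs z hz
      rw [pow_zero, one_mul]
      exact hs.le_one z (H.subset (hclU (subset_closure (hQV hz))))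
    | succ n ih =>
      intro s hs z hz
      obtain ⟨t, ht, hst⟩ := hstep s hs
      calc (1 + η) ^ (n + 1) * s z = (1 + η) ^ n * ((1 + η) * s z) := by ring
        _ ≤ (1 + η) ^ n * t (g z) := by gcongr; exact hst z (hQV hz)
        _ ≤ 1 := ih t ht (g z) (hgQ hz)
  intro z hz
  by_contra! hpos
  obtain ⟨n, hn⟩ := pow_unbounded_of_one_lt (1 / s z) (by linarith : 1 < 1 + η)
  rw [div_lt_iff₀ hpos] at hn
  linarith [hiter n s hs z hz]

theorem not_hasGap_of_hasGap_frontier (H : PLSetting g U' U d) (hV₀ : IsOpen V₀)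
    (hcl : IsCompact (closure V₀)) (hclU : closure V₀ ⊆ U') (hQV : Q ⊆ V₀) (hgQ : MapsTo g Q Q)
    (hFV : F ⊆ V₀) (hF : U' ∩ g ⁻¹' F ⊆ F) (hgap : HasGap U F U' F (frontier V₀))
    {p : ℂ} (hp : p ∈ Q) {N : Set ℂ} (hN : p ∈ N) : ¬ HasGap U F U' F N := by
  have hVU : V₀ ⊆ U' := subset_closure.trans hclU
  rintro ⟨δ, hδ, hN_gap⟩
  obtain ⟨t, ht, -, htN⟩ := hN_gap (fun _ ↦ 0)
    ⟨fun _ _ ↦ le_rfl, fun _ _ ↦ zero_le_one, fun _ _ ↦ rfl, fun z _ ↦ .const 0 z⟩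
  have hpush := H.isCompetitor_nonpos_of_hasGap_frontier hV₀ hcl hclU hQV hgQ hFV hF hgap
    (H.isCompetitor_fiberMax ((hFV.trans hVU).trans H.subset) hF ht) (g p) (hgQ hp)
  linarith [htN p hN, H.le_fiberMax ht.subharmonicAt (hVU (hQV hp))]

end PLSetting

/-! ### Inverse branches -/

theorem IsTopDisk.exists_injOn_mapsTo_ball {V : Set ℂ} (hV : IsTopDisk V) (hne : V ≠ univ) :
    ∃ χ : ℂ → ℂ, MapsTo χ V (ball 0 1) ∧ InjOn χ V ∧ ∀ z ∈ V, deriv χ z ≠ 0 := by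
  obtain ⟨b, hb⟩ := (ne_univ_iff_exists_notMem V).1 hne
  obtain ⟨σ, hσ, hσa⟩ := hV.exists_sq_eq_sub hb
  obtain ⟨p, hp⟩ := hV.2.1.nonempty
  obtain ⟨ρ, hρ, hρσ⟩ := exists_pos_le_norm_add_of_sq_eq_sub hb hσ (hV.1.mem_nhds hp)
    (hσa p hp).1 (hσa p hp).2
  have hρ₂ : ((ρ / 2 : ℝ) : ℂ) ≠ 0 := Complex.ofReal_ne_zero.2 (half_pos hρ).ne'
  have hne₀ : ∀ z ∈ V, 0 < ‖σ z + σ p‖ := fun z hz ↦ hρ.trans_le (hρσ z hz)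
  refine ⟨fun z ↦ (ρ / 2 : ℝ) / (σ z + σ p), fun z hz ↦ ?_, fun z _ w _ h ↦ ?_,
    fun z hz ↦ ?_⟩
  · rw [mem_ball_zero_iff, norm_div, Complex.norm_of_nonneg (half_pos hρ).le,
      div_lt_one (hne₀ z hz)]
    linarith [hρσ z hz]
  · have hσzw : σ z = σ w := add_right_cancel
      (inv_injective (mul_left_cancel₀ hρ₂ (by simpa only [div_eq_mul_inv] using h)))
    exact sub_left_injective (by rw [← hσ, ← hσ, hσzw] : z - b = w - b)
  · have hderiv := ((hσa z hz).1.differentiableAt.hasDerivAt.add_const (σ p)).fun_inv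
      (norm_pos_iff.1 (hne₀ z hz)) |>.const_mul ((ρ / 2 : ℝ) : ℂ)
    simp only [div_eq_mul_inv ((ρ / 2 : ℝ) : ℂ)]
    rw [hderiv.deriv]
    exact mul_ne_zero hρ₂ (div_ne_zero (neg_ne_zero.2 (hσa z hz).2)
      (pow_ne_zero 2 (norm_pos_iff.1 (hne₀ z hz))))

/-- Schwarz's lemma, applied after a bounded injective holomorphic map of `V`. -/
theorem IsTopDisk.exists_forall_mapsTo_closedBall {V Y W : Set ℂ} (hV : IsTopDisk V)
    (hne : V ≠ univ) (hY : IsCompact Y) (hYV : Y ⊆ V) (hW : IsOpen W) (hYW : Y ⊆ W) {x : ℂ}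
    {R : ℝ} (hR : 0 < R) :
    ∃ r > 0, closedBall x r ⊆ ball x R ∧ ∀ φ : ℂ → ℂ, DifferentiableOn ℂ φ (ball x R) →
      MapsTo φ (ball x R) V → φ x ∈ Y → MapsTo φ (closedBall x r) W := by
  obtain ⟨χ, hχ_ball, hχ_inj, hχ_deriv⟩ := hV.exists_injOn_mapsTo_ball hne
  have hχ : DifferentiableOn ℂ χ V := fun z hz ↦
    (differentiableAt_of_deriv_ne_zero (hχ_deriv z hz)).differentiableWithinAt
  have hopen : IsOpen (χ '' (W ∩ V)) := by
    rw [isOpen_iff_mem_nhds]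
    rintro _ ⟨z, hz, rfl⟩
    rw [← (hχ.analyticAt (hV.1.mem_nhds hz.2)).hasStrictDerivAt.map_nhds_eq (hχ_deriv z hz.2)]
    exact image_mem_map ((hW.inter hV.1).mem_nhds hz)
  obtain ⟨δ, hδ, hδW⟩ := (hY.image_of_continuousOn
    (hχ.continuousOn.mono hYV)).exists_thickening_subset_open hopen
      (image_mono (subset_inter hYW hYV))
  have hrR : min (R / 2) (δ * R / 4) < R := (min_le_left _ _).trans_lt (half_lt_self hR)
  have hsub : closedBall x (min (R / 2) (δ * R / 4)) ⊆ ball x R := closedBall_subset_ball hrR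
  refine ⟨min (R / 2) (δ * R / 4), by positivity, hsub, fun φ hφ hφV hφx v hv ↦ ?_⟩
  have hschwarz : dist (χ (φ v)) (χ (φ x)) ≤ 2 / R * dist v x :=
    Complex.dist_le_div_mul_dist_of_mapsTo_ball (f := χ ∘ φ) (hχ.comp hφ hφV) (fun w hw ↦ by
      have hw₁ := mem_ball_zero_iff.1 (hχ_ball (hφV hw))
      have hx₁ := mem_ball_zero_iff.1 (hχ_ball (hφV (mem_ball_self hR)))
      rw [mem_closedBall_iff_norm]
      exact (norm_sub_le _ _).trans (by simp only [comp_apply]; linarith)) (hsub hv)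
  have hdist : dist (χ (φ v)) (χ (φ x)) < δ := calc
    dist (χ (φ v)) (χ (φ x)) ≤ 2 / R * dist v x := hschwarz
    _ ≤ 2 / R * (δ * R / 4) := by gcongr; exact (mem_closedBall.1 hv).trans (min_le_right _ _)
    _ = δ / 2 := by field_simp; ring
    _ < δ := half_lt_self hδ
  obtain ⟨y, hy, hyv⟩ := hδW (mem_thickening_iff.2 ⟨_, mem_image_of_mem χ hφx, hdist⟩)
  exact hχ_inj hy.2 (hφV (hsub hv)) hyv ▸ hy.1

theorem isProperMap_restrict {α β : Type*} [TopologicalSpace α] [TopologicalSpace β] [T2Space β]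
    [LocallyCompactSpace β] {f : α → β} {V : Set α} {W : Set β} (hW : IsOpen W)
    (hf : ContinuousOn f V) (hm : MapsTo f V W)
    (hproper : ∀ K ⊆ W, IsCompact K → IsCompact (V ∩ f ⁻¹' K)) :
    IsProperMap (hm.restrict f V W) := by
  have : LocallyCompactSpace W := hW.locallyCompactSpace
  refine isProperMap_iff_isCompact_preimage.2 ⟨hf.mapsToRestrict hm, fun K hK ↦ ?_⟩
  rw [Subtype.isCompact_iff]
  convert hproper (Subtype.val '' K) (Subtype.coe_image_subset W K)
    (hK.image continuous_subtype_val) using 1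
  ext z
  constructor
  · rintro ⟨z, hz, rfl⟩
    exact ⟨z.2, _, hz, rfl⟩
  · rintro ⟨hz, w, hw, hwz⟩
    have hwz' : hm.restrict f V W ⟨z, hz⟩ = w := Subtype.ext hwz.symm
    exact ⟨⟨z, hz⟩, mem_preimage.2 (hwz' ▸ hw), rfl⟩

theorem isLocalHomeomorphOn_of_deriv_ne_zero {𝕜 : Type*} [RCLike 𝕜] {f : 𝕜 → 𝕜} {s : Set 𝕜}
    (hf : ∀ z ∈ s, AnalyticAt 𝕜 f z) (hf' : ∀ z ∈ s, deriv f z ≠ 0) :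
    IsLocalHomeomorphOn f s :=
  .mk _ _ fun z hz ↦
    have hfz := (hf z hz).hasStrictDerivAt.hasStrictFDerivAt_equiv (hf' z hz)
    ⟨hfz.toOpenPartialHomeomorph f, hfz.mem_toOpenPartialHomeomorph_source, fun _ _ ↦ rfl⟩

theorem differentiableAt_of_eventually_comp_eq {𝕜 : Type*} [NontriviallyNormedField 𝕜]
    [CompleteSpace 𝕜] {g φ ψ : 𝕜 → 𝕜} {g' v : 𝕜} (hg : HasStrictDerivAt g g' (ψ v))
    (hg' : g' ≠ 0) (hψ : ContinuousAt ψ v) (hφ : DifferentiableAt 𝕜 φ v)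
    (h : g ∘ ψ =ᶠ[𝓝 v] φ) : DifferentiableAt 𝕜 ψ v := by
  have hinv := (hg.to_localInverse hg').hasDerivAt.differentiableAt
  have hgψ : g (ψ v) = φ v := h.self_of_nhds
  rw [hgψ] at hinv
  refine (hinv.comp v hφ).congr_of_eventuallyEq ?_
  filter_upwards [hψ.eventually (hg.eventually_left_inverse hg'), h] with u hu hgu
  rw [comp_apply, ← hgu]
  exact hu.symm

namespace PLSetting

variable {g φ : ℂ → ℂ} {U' U Y : Set ℂ} {d : ℕ} {x z : ℂ} {R : ℝ}

theorem deriv_ne_zero (H : PLSetting g U' U d) (hz : z ∈ U') (hgz : g z ∉ postCrit g U') :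
    deriv g z ≠ 0 :=
  fun h ↦ hgz (H.mapsTo_postCrit (critPts_subset_postCrit g U' ⟨hz, h⟩))

theorem finite_inter_preimage_singleton (H : PLSetting g U' U d) {w : ℂ} (hw : w ∈ U)
    (hwP : w ∉ postCrit g U') : (U' ∩ g ⁻¹' {w}).Finite := by
  refine finite_of_ncard_pos ?_
  rw [H.deg.2 w hw]
  · exact two_pos.trans_le H.two_le_d
  · rintro ⟨c, hc, rfl⟩
    exact hwP (H.mapsTo_postCrit (critPts_subset_postCrit g U' hc))

theorem isCoveringMapOn_restrict (H : PLSetting g U' U d) :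
    IsCoveringMapOn (H.mapsTo.restrict g U' U) (Subtype.val ⁻¹' (postCrit g U')ᶜ) := by
  refine (isProperMap_restrict H.disk.1 H.holo.continuousOn H.mapsTo
    H.proper).isClosedMap.isCoveringMapOn_of_isLocalHomeomorphOn (fun w hw ↦ ?_) ?_
  · refine Finite.of_finite_image (f := Subtype.val) ?_ Subtype.val_injective.injOn
    refine (H.finite_inter_preimage_singleton w.2 hw).subset ?_
    rintro _ ⟨z, hz, rfl⟩
    exact ⟨z.2, congrArg Subtype.val hz⟩
  · have hg : IsLocalHomeomorphOn g {z ∈ U' | deriv g z ≠ 0} :=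
      isLocalHomeomorphOn_of_deriv_ne_zero
        (fun z hz ↦ H.holo.analyticAt (H.disk'.1.mem_nhds hz.1)) fun z hz ↦ hz.2
    exact .of_comp_left (g := (Subtype.val : U → ℂ))
      (hg.comp H.disk'.1.isOpenEmbedding_subtypeVal.isLocalHomeomorph.isLocalHomeomorphOn
        fun z hz ↦ ⟨z.2, H.deriv_ne_zero z.2 hz⟩)
      H.disk.1.isOpenEmbedding_subtypeVal.isLocalHomeomorph.isLocalHomeomorphOn
      fun z _ ↦ (H.holo.continuousOn.mapsToRestrict H.mapsTo).continuousAt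

theorem exists_continuousOn_lift (H : PLSetting g U' U d) (hφ : ContinuousOn φ (ball x R))
    (hφU : MapsTo φ (ball x R) (U \ postCrit g U')) {w : ℂ} (hw : w ∈ ball x R) (hz : z ∈ U')
    (hgz : g z = φ w) :
    ∃ ψ : ℂ → ℂ, ContinuousOn ψ (ball x R) ∧ MapsTo ψ (ball x R) U' ∧
      EqOn (g ∘ ψ) φ (ball x R) ∧ ψ w = z := by
  classical
  have : LocallyPathConnectedSpace (ball x R) := isOpen_ball.locallyPathConnectedSpace
  have : ContractibleSpace (ball x R) := (convex_ball x R).contractibleSpace ⟨w, hw⟩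
  have hm : MapsTo φ (ball x R) U := fun v hv ↦ (hφU hv).1
  obtain ⟨Φ, ⟨hΦw, hΦ⟩, -⟩ := H.isCoveringMapOn_restrict.existsUnique_continuousMap_lifts
    ⟨hm.restrict φ _ U, hφ.mapsToRestrict hm⟩ (a₀ := ⟨w, hw⟩) (e₀ := ⟨z, hz⟩) (Subtype.ext hgz)
    fun v ↦ (hφU v.2).2
  set ψ : ℂ → ℂ := fun v ↦ if hv : v ∈ ball x R then Φ ⟨v, hv⟩ else 0
  have hψ : ∀ v (hv : v ∈ ball x R), ψ v = Φ ⟨v, hv⟩ := fun v hv ↦ dif_pos hv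
  refine ⟨ψ, ?_, fun v hv ↦ ?_, fun v hv ↦ ?_, by rw [hψ w hw, hΦw]⟩
  · rw [continuousOn_iff_continuous_domRestrict,
      (funext fun v ↦ hψ v v.2 : (ball x R).domRestrict ψ = fun v ↦ (Φ v : ℂ))]
    exact continuous_subtype_val.comp Φ.continuous
  · rw [hψ v hv]
    exact (Φ ⟨v, hv⟩).2
  · rw [comp_apply, hψ v hv]
    exact congrArg Subtype.val (congrFun hΦ ⟨v, hv⟩)

theorem exists_differentiableOn_lift (H : PLSetting g U' U d)
    (hφ : DifferentiableOn ℂ φ (ball x R)) (hφU : MapsTo φ (ball x R) (U \ postCrit g U')) {w : ℂ}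
    (hw : w ∈ ball x R) (hz : z ∈ U') (hgz : g z = φ w) :
    ∃ ψ : ℂ → ℂ, DifferentiableOn ℂ ψ (ball x R) ∧ MapsTo ψ (ball x R) U' ∧
      EqOn (g ∘ ψ) φ (ball x R) ∧ ψ w = z := by
  obtain ⟨ψ, hψ, hψU, hgψ, hψw⟩ := H.exists_continuousOn_lift hφ.continuousOn hφU hw hz hgz
  refine ⟨ψ, fun v hv ↦ ?_, hψU, hgψ, hψw⟩
  have hball : ball x R ∈ 𝓝 v := isOpen_ball.mem_nhds hv
  have hgψv : g (ψ v) = φ v := hgψ hv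
  exact (differentiableAt_of_eventually_comp_eq
    (H.holo.analyticAt (H.disk'.1.mem_nhds (hψU hv))).hasStrictDerivAt
    (H.deriv_ne_zero (hψU hv) (hgψv ▸ (hφU hv).2)) (hψ.continuousAt hball)
    (hφ.differentiableAt hball) (hgψ.eventuallyEq_of_mem hball)).differentiableWithinAt

theorem exists_inverse_branch_iterate (H : PLSetting g U' U d) (hY : U' ∩ g ⁻¹' Y ⊆ Y)
    (hx : x ∈ Y) (hR₀ : 0 < R) (hR : ball x R ⊆ U' \ postCrit g U') (n : ℕ)
    (hz : ∀ k < n, g^[k] z ∈ U') (hzR : g^[n] z ∈ ball x R) :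
    ∃ φ : ℂ → ℂ, DifferentiableOn ℂ φ (ball x R) ∧ MapsTo φ (ball x R) (U' \ postCrit g U') ∧
      φ (g^[n] z) = z ∧ φ x ∈ Y := by
  induction n generalizing z with
  | zero => exact ⟨id, differentiableOn_id, hR, rfl, hx⟩
  | succ n ih =>
    rw [iterate_succ_apply] at hzR ⊢
    obtain ⟨φ, hφ, hφU, hφz, hφx⟩ := ih (fun k hk ↦ hz (k + 1) (Nat.succ_lt_succ hk)) hzR
    obtain ⟨ψ, hψ, hψU, hgψ, hψz⟩ := H.exists_differentiableOn_lift hφ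
      (fun v hv ↦ ⟨H.subset (hφU hv).1, (hφU hv).2⟩) hzR (hz 0 n.succ_pos) hφz.symm
    refine ⟨ψ, hψ, fun v hv ↦ ⟨hψU hv, fun hψP ↦ (hφU hv).2 ?_⟩, hψz, hY ⟨?_, ?_⟩⟩
    · exact mem_of_eq_of_mem (hgψ hv).symm (H.mapsTo_postCrit hψP)
    · exact hψU (mem_ball_self hR₀)
    · exact mem_preimage.2 (mem_of_eq_of_mem (hgψ (mem_ball_self hR₀)) hφx)

theorem exists_backwardOrbit_closedBall_subset (H : PLSetting g U' U d) (hY : IsCompact Y)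
    (hYU : Y ⊆ U') (hgY : U' ∩ g ⁻¹' Y ⊆ Y) (hx : x ∈ Y) (hxP : x ∉ postCrit g U') {W : Set ℂ}
    (hW : IsOpen W) (hYW : Y ⊆ W) :
    ∃ r > 0, backwardOrbit g U' (closedBall x r) ⊆ W := by
  obtain ⟨R, hR₀, hR⟩ := Metric.mem_nhds_iff.1
    ((H.disk'.1.sdiff H.postCrit_compact.isClosed).mem_nhds ⟨hYU hx, hxP⟩)
  have huniv : U' ≠ univ := fun h ↦ H.ne (H.subset.antisymm (h ▸ subset_univ U))
  obtain ⟨r, hr, hrR, hφW⟩ :=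
    H.disk'.exists_forall_mapsTo_closedBall huniv hY hYU hW hYW (x := x) hR₀
  refine ⟨r, hr, ?_⟩
  rintro z ⟨n, hzn, hzr⟩
  obtain ⟨φ, hφ, hφU, hφz, hφx⟩ :=
    H.exists_inverse_branch_iterate hgY hx hR₀ hR n hzn (hrR hzr)
  exact hφz ▸ hφW φ hφ (fun v hv ↦ (hφU hv).1) hφx hzr

end PLSetting

/-! ### The dichotomy -/

theorem exists_isCompact_forall_isPreconnected {E : Type*} [NormedAddCommGroup E]
    [NormedSpace ℝ E] [ProperSpace E] {Z A : Set E} (hZo : IsOpen Z) (hZ : IsPreconnected Z)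
    {p : E} (hp : p ∈ Z) (hA : IsCompact A) (hAZ : A ⊆ Z) :
    ∃ K ⊆ Z, IsCompact K ∧ ∀ z ∈ A, ∃ S ⊆ K, IsPreconnected S ∧ p ∈ S ∧ z ∈ S := by
  refine hA.induction_on (p := fun A ↦ ∃ K ⊆ Z, IsCompact K ∧
    ∀ z ∈ A, ∃ S ⊆ K, IsPreconnected S ∧ p ∈ S ∧ z ∈ S) ⟨∅, empty_subset _, isCompact_empty,
      fun z hz ↦ hz.elim⟩ ?_ ?_ fun z hz ↦ ?_
  · rintro B C hBC ⟨K, hKZ, hK, hS⟩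
    exact ⟨K, hKZ, hK, fun z hz ↦ hS z (hBC hz)⟩
  · rintro B C ⟨K, hKZ, hK, hKS⟩ ⟨L, hLZ, hL, hLS⟩
    refine ⟨K ∪ L, union_subset hKZ hLZ, hK.union hL, ?_⟩
    rintro z (hz | hz)
    · exact (hKS z hz).imp fun S hS ↦ ⟨hS.1.trans subset_union_left, hS.2⟩
    · exact (hLS z hz).imp fun S hS ↦ ⟨hS.1.trans subset_union_right, hS.2⟩
  · obtain ⟨γ, hγ⟩ := (hZo.isConnected_iff_isPathConnected.1 ⟨⟨p, hp⟩, hZ⟩).joinedIn p hp z (hAZ hz)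
    obtain ⟨ε, hε, hεZ⟩ := nhds_basis_closedBall.mem_iff.1 (hZo.mem_nhds (hAZ hz))
    refine ⟨closedBall z ε, mem_nhdsWithin_of_mem_nhds (closedBall_mem_nhds z hε),
      range γ ∪ closedBall z ε, union_subset (range_subset_iff.2 hγ) hεZ,
      (isCompact_range γ.continuous).union (isCompact_closedBall z ε),
      fun w hw ↦ ⟨_, Subset.rfl, ?_, Or.inl ⟨0, γ.source⟩, Or.inr hw⟩⟩
    exact (isPreconnected_range γ.continuous).union z ⟨1, γ.target⟩ (mem_closedBall_self hε.le)
      (convex_closedBall z ε).isPreconnected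

theorem IsTopDisk.isPreconnected_sdiff {V Y : Set ℂ} (hV : IsTopDisk V) (hY : IsCompact Y)
    (hYV : Y ⊆ V) (hfull : topHull Y = Y) : IsPreconnected (V \ Y) := by
  have hYc : IsPreconnected Yᶜ := hfull ▸ isPreconnected_compl_topHull hY.isBounded
  have hunion : V ∪ Yᶜ = univ := compl_subset_iff_union.1 (compl_subset_compl.2 hYV)
  exact isPreconnected_inter_of_union_eq_univ hV.1 hY.isClosed.isOpen_compl
    hV.2.1.isPreconnected hYc hunion

namespace PLSetting

variable {g : ℂ → ℂ} {U' U X Q Y : Set ℂ} {d : ℕ} {x : ℂ}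

theorem mapsTo_topHull (H : PLSetting g U' U d) (hX : IsCompact X) (hXU : X ⊆ U')
    (hgX : MapsTo g X X) : MapsTo g (topHull X) (topHull X) :=
  _root_.mapsTo_topHull hX (H.holo.continuousOn.mono (H.topHull_subset hX hXU))
    (fun _ hz ↦ H.nhds_le_map (H.topHull_subset hX hXU hz)) hgX

theorem exists_isClosed_inter_preimage_subset (H : PLSetting g U' U d) (hY : IsCompact Y)
    (hYU : Y ⊆ U') (hgY : U' ∩ g ⁻¹' Y ⊆ Y) (hx : x ∈ Y) (hxP : x ∉ postCrit g U') {W : Set ℂ}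
    (hW : IsOpen W) (hYW : Y ⊆ W) :
    ∃ F ⊆ W, IsClosed F ∧ (interior F).Nonempty ∧ U' ∩ g ⁻¹' F ⊆ F := by
  obtain ⟨W', hW', hYW', hW'W, -⟩ := exists_open_between_and_isCompact_closure hY hW hYW
  obtain ⟨r, hr, hrW'⟩ :=
    H.exists_backwardOrbit_closedBall_subset hY hYU hgY hx hxP hW' hYW'
  have hx_nhds : backwardOrbit g U' (closedBall x r) ∈ 𝓝 x :=
    mem_of_superset (closedBall_mem_nhds x hr) (subset_backwardOrbit g U' _)
  exact ⟨closure (backwardOrbit g U' (closedBall x r)), (closure_mono hrW').trans hW'W,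
    isClosed_closure, ⟨x, interior_mono subset_closure (mem_interior_iff_mem_nhds.2 hx_nhds)⟩,
    inter_preimage_closure_subset H.disk'.1 (fun _ hz ↦ H.nhds_le_map hz)
      (inter_preimage_backwardOrbit_subset g U' _)⟩

theorem subset_of_inter_preimage_subset (H : PLSetting g U' U d) (hQ : IsCompact Q)
    (hQU : Q ⊆ U') (hgQ : MapsTo g Q Q) (hY : IsCompact Y) (hYQ : Y ⊆ Q)
    (hgY : U' ∩ g ⁻¹' Y ⊆ Y) (hYfull : topHull Y = Y) (hx : x ∈ Y) (hxP : x ∉ postCrit g U') :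
    Q ⊆ Y := by
  intro p hp
  by_contra hpY
  obtain ⟨V₀, hV₀, hQV, hVU, hVc⟩ :=
    exists_open_between_and_isCompact_closure hQ H.disk'.1 hQU
  obtain ⟨b, ⟨hbU, hbV⟩, hgap_b⟩ :=
    exists_mem_nhds_hasGap_of_ne H.disk' H.disk H.subset H.ne hVc hVU
  have hfrontier : IsCompact (frontier V₀) :=
    hVc.of_isClosed_subset isClosed_frontier frontier_subset_closure
  have hfrontierU : frontier V₀ ⊆ U' \ Y := fun z hz ↦
    ⟨hVU hz.1, fun hzY ↦ hz.2 (hV₀.interior_eq.symm ▸ hQV (hYQ hzY))⟩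
  obtain ⟨K, hKU, hK, hKS⟩ := exists_isCompact_forall_isPreconnected
    (H.disk'.1.sdiff hY.isClosed) (H.disk'.isPreconnected_sdiff hY (hYQ.trans hQU) hYfull)
    ⟨hbU, fun hbY ↦ hbV (subset_closure (hQV (hYQ hbY)))⟩ (hfrontier.insert p)
    (insert_subset ⟨hQU hp, hpY⟩ hfrontierU)
  obtain ⟨F, hFW, hFcl, hFint, hgF⟩ := H.exists_isClosed_inter_preimage_subset hY
    (hYQ.trans hQU) hgY hx hxP (hV₀.sdiff hK.isClosed)
    fun z hz ↦ ⟨hQV (hYQ hz), fun hzK ↦ (hKU hzK).2 hz⟩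
  have hFV : F ⊆ V₀ := hFW.trans sdiff_subset
  have hgap : ∀ z ∈ insert p (frontier V₀), ∃ N ∈ 𝓝 z, HasGap U F U' F N := by
    intro z hz
    obtain ⟨S, hSK, hS, hbS, hzS⟩ := hKS z hz
    exact HasGap.exists_mem_nhds_of_isPreconnected H.disk'.1 H.subset hFcl hS
      (fun w hw ↦ ⟨(hKU (hSK hw)).1, fun hwF ↦ (hFW hwF).2 (hSK hw)⟩)
      ⟨b, hbS, hgap_b F (hFV.trans subset_closure) hFint⟩ z hzS
  obtain ⟨N, hN, hgapN⟩ := hgap p (mem_insert _ _)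
  exact H.not_hasGap_of_hasGap_frontier hV₀ hVc hVU hQV hgQ hFV hgF
    (.of_isCompact H.subset Subset.rfl hfrontier fun z hz ↦ hgap z (mem_insert_of_mem p hz)) hp
    (mem_of_mem_nhds hN) hgapN

end PLSetting

theorem postCrit_in_or_boundary_general {g : ℂ → ℂ} {U' U X : Set ℂ} {d : ℕ}
    (H : PLSetting g U' U d) (hX : IsCompact X) (hXU : X ⊆ U') (hgX : MapsTo g X X) :
    topHull X ⊆ grandOrbitCore g U' (topHull X) ∨
      grandOrbitCore g U' (topHull X) ⊆ postCrit g U' := by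
  refine or_iff_not_imp_right.2 fun h ↦ ?_
  obtain ⟨x, hx, hxP⟩ := not_subset.1 h
  exact H.subset_of_inter_preimage_subset (isCompact_topHull hX) (H.topHull_subset hX hXU)
    (H.mapsTo_topHull hX hXU hgX) (H.isCompact_grandOrbitCore hX hXU)
    grandOrbitCore_subset inter_preimage_grandOrbitCore_subset
    (H.topHull_grandOrbitCore hX hXU) hx hxP

/-- **Proposition.** Let `X ⊆ U'` be a compact forward invariant set containing the
postcritical set, and `X* = {x ∈ hull(X) : GO(x) ⊆ hull(X)}`. If `X* ≠ ∅` then either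
`P_g ⊆ X*` or `∂X* ⊆ P_g`. -/
theorem postCrit_in_or_boundary {g : ℂ → ℂ} {U' U : Set ℂ} {d : ℕ}
    (H : PLSetting g U' U d) {X : Set ℂ}
    (hXcomp : IsCompact X) (hXsub : X ⊆ U') (hXinv : g '' X ⊆ X)
    (hPX : postCrit g U' ⊆ X)
    (hne : {x ∈ topHull X | grandOrbit g U' x ⊆ topHull X}.Nonempty) :
    postCrit g U' ⊆ {x ∈ topHull X | grandOrbit g U' x ⊆ topHull X} ∨
    frontier {x ∈ topHull X | grandOrbit g U' x ⊆ topHull X} ⊆ postCrit g U' := by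
  exact (postCrit_in_or_boundary_general H hXcomp hXsub (mapsTo_iff_image_subset.2 hXinv)).imp
    (hPX.trans (subset_topHull X)).trans
    (H.isCompact_grandOrbitCore hXcomp hXsub).isClosed.frontier_subset.trans
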